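/- arXiv:0806.1963 — 2 statements merged into one kernel-verified Lean document; each statement's English description precedes it below -/
import Mathlib

section
/- (Lemma 6.1.2) Let d ≥ 1 be an integer, p ∈ [2,∞), θ ∈ (d−1, d−1+p), γ = θ−d−p+1, and β, ε ∈ (0,∞). Then there exists a constant N = N(d,p,θ,ε) such that for every bounded measurable function ā = (ā¹,…,ā^d) : ℝ^d_+ → ℝ^d satisfying |ā(x) − ā(y)| ≤ β whenever x, y ∈ ℝ^d_+ and |x − y| ≤ ε(x¹ ∧ y¹), and every u ∈ C_c^∞(ℝ^d_+), one has | ∫_{ℝ^d_+} (x¹)^γ |u|^{p−2} u ā^i D_i u dx + p^{−1} γ ∫_{ℝ^d_+} ā¹ (x¹)^{γ−1} |u|^p dx | ≤ N β (‖M^{−1}u‖_{L_{p,θ}} + ‖Du‖_{L_{p,θ}})^p. -/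
open MeasureTheory Finset

/-- The weighted norm `‖f‖_{L_{p,θ}} = (∫_{ℝ^d_+} (x¹)^{θ-d} |f(x)|^p dx)^{1/p}`
on the half space `ℝ^d_+ = {x : x¹ > 0}`. -/
noncomputable def wnorm (d : ℕ) [NeZero d] (p θ : ℝ)
    (f : EuclideanSpace ℝ (Fin d) → ℝ) : ℝ :=
  (∫ x in {x : EuclideanSpace ℝ (Fin d) | 0 < x 0},
      (x 0) ^ (θ - d) * |f x| ^ p) ^ (1 / p)

/-! For `g = |u|^p` the left-hand side is `p⁻¹ ∫ (x¹ āⁱ D_i g + γ ā¹ g) (x¹)^{γ-1} dx`, which would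
vanish by integration by parts if `ā` were constant. For each fixed direction `v`, the vector field
`x ↦ x¹ v` generates an explicit flow of the half-space which has constant divergence with respect
to `(x¹)^{γ-1} dx` and, for short times depending only on `ε` and `v`, moves `x` by at most `ε x¹`.
Replacing a coordinate of `ā` by its average along this flow therefore costs at most `β`,
while on the average one can integrate by parts along the flow, leaving only differences of `ā`
along trajectories and no derivatives of `ā`. Young's inequality finally bounds `x¹ |D|u|^p|` by
`p (|u|^p + (x¹ |Du|)^p)`. -/

section ExpPrimitive

/-- The primitive of `s ↦ e^{κs}` vanishing at `0`, that is `(e^{κs} - 1) / κ`, or `s` if `κ = 0`.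
It is both the time change of the flows below and the normalisation of averages along them. -/
noncomputable def expPrimitive (κ s : ℝ) : ℝ :=
  ∫ t in (0 : ℝ)..s, Real.exp (κ * t)

lemma hasDerivAt_expPrimitive (κ s : ℝ) :
    HasDerivAt (expPrimitive κ) (Real.exp (κ * s)) s :=
  (by fun_prop : Continuous fun t : ℝ => Real.exp (κ * t)).integral_hasStrictDerivAt 0 s
    |>.hasDerivAt

@[fun_prop]
lemma continuous_expPrimitive (κ : ℝ) : Continuous (expPrimitive κ) :=
  continuous_iff_continuousAt.2 fun s => (hasDerivAt_expPrimitive κ s).continuousAt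

@[simp]
lemma expPrimitive_zero (κ : ℝ) : expPrimitive κ 0 = 0 :=
  intervalIntegral.integral_same

lemma expPrimitive_pos (κ : ℝ) {s : ℝ} (hs : 0 < s) : 0 < expPrimitive κ s :=
  intervalIntegral.intervalIntegral_pos_of_pos (Continuous.intervalIntegrable (by fun_prop) _ _)
    (fun _ => Real.exp_pos _) hs

lemma mul_expPrimitive (κ s : ℝ) : κ * expPrimitive κ s = Real.exp (κ * s) - 1 := by
  rw [expPrimitive, intervalIntegral.mul_integral_comp_mul_left, integral_exp, mul_zero,
    Real.exp_zero]

lemma expPrimitive_add (κ s t : ℝ) :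
    expPrimitive κ (s + t) = expPrimitive κ t + expPrimitive κ s * Real.exp (κ * t) := by
  have hshift : ∫ r in t..s + t, Real.exp (κ * r) = expPrimitive κ s * Real.exp (κ * t) := by
    rw [expPrimitive, ← intervalIntegral.integral_mul_const]
    simpa only [zero_add, mul_add, Real.exp_add] using
      (intervalIntegral.integral_comp_add_right (a := 0) (b := s)
        (fun r => Real.exp (κ * r)) t).symm
  rw [← hshift, expPrimitive, expPrimitive, intervalIntegral.integral_add_adjacent_intervals] <;>
    exact Continuous.intervalIntegrable (by fun_prop) _ _

end ExpPrimitive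

/-- The flow `Φ` has constant divergence `κ` with respect to `μ`: in time `s` it multiplies
`μ`-volumes by `e^{κs}`. A pushforward measures preimages, whence the sign in the exponent. -/
def HasDivergence {E : Type*} [TopologicalSpace E] [MeasurableSpace E] (Φ : Flow ℝ E)
    (μ : Measure E) (κ : ℝ) : Prop :=
  ∀ s, μ.map (Φ s) = ENNReal.ofReal (Real.exp (-(κ * s))) • μ

lemma abs_integral_mul_sub_integral_mul_le {α : Type*} [MeasurableSpace α] {μ : Measure α}
    {b b' f : α → ℝ} {β : ℝ} (hbf : Integrable (fun x => b x * f x) μ)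
    (hb'f : Integrable (fun x => b' x * f x) μ) (hf : Integrable f μ)
    (hosc : ∀ᵐ x ∂μ, |b x - b' x| ≤ β) :
    |(∫ x, b x * f x ∂μ) - ∫ x, b' x * f x ∂μ| ≤ β * ∫ x, |f x| ∂μ := by
  rw [← integral_sub hbf hb'f, ← integral_const_mul, ← Real.norm_eq_abs]
  refine norm_integral_le_of_norm_le (hf.abs.const_mul β) ?_
  filter_upwards [hosc] with x hx
  rw [← sub_mul, norm_mul, Real.norm_eq_abs, Real.norm_eq_abs]
  gcongr

namespace HasDivergence

variable {E : Type*} [TopologicalSpace E] [MeasurableSpace E] [BorelSpace E]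
  {Φ : Flow ℝ E} {μ : Measure E} {κ : ℝ}

lemma integral_comp (hΦ : HasDivergence Φ μ κ) (s : ℝ) (f : E → ℝ) :
    ∫ x, f (Φ s x) ∂μ = Real.exp (-(κ * s)) * ∫ x, f x ∂μ := by
  have hmap : ∫ x, f x ∂μ.map (Φ s) = ∫ x, f (Φ s x) ∂μ :=
    (Φ.toHomeomorph s).measurableEmbedding.integral_map f
  rw [← hmap, hΦ, integral_smul_measure, ENNReal.toReal_ofReal (Real.exp_pos _).le, smul_eq_mul]

lemma integrable_comp (hΦ : HasDivergence Φ μ κ) (s : ℝ) {f : E → ℝ} (hf : Integrable f μ) :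
    Integrable (fun x => f (Φ s x)) μ := by
  have hmap : Integrable f (μ.map (Φ s)) := by
    rw [hΦ]
    exact hf.smul_measure ENNReal.ofReal_ne_top
  exact hmap.comp_measurable (Φ.continuous_toFun s).measurable

lemma exp_mul_integral_comp_mul (hΦ : HasDivergence Φ μ κ) (s : ℝ) (b f : E → ℝ) :
    Real.exp (κ * s) * ∫ x, b (Φ s x) * f x ∂μ = ∫ x, b x * f (Φ (-s) x) ∂μ := by
  have h := hΦ.integral_comp s fun x => b x * f (Φ (-s) x)
  simp only [← Φ.map_add, neg_add_cancel, Φ.map_zero_apply] at h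
  rw [h, ← mul_assoc, ← Real.exp_add, add_neg_cancel, Real.exp_zero, one_mul]

lemma restrict (hΦ : HasDivergence Φ μ κ) {A : Set E} (hA : MeasurableSet A)
    (hinv : IsInvariant Φ A) : HasDivergence Φ (μ.restrict A) κ := by
  intro s
  have hpre : Φ s ⁻¹' A = A := by
    refine Set.Subset.antisymm (fun x hx => ?_) (hinv s)
    simpa only [← Φ.map_add, neg_add_cancel, Φ.map_zero_apply] using hinv (-s) hx
  have h := Measure.restrict_map (μ := μ) (Φ.continuous_toFun s).measurable hA
  rw [hpre, hΦ, Measure.restrict_smul] at h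
  exact h.symm

lemma withDensity (hΦ : HasDivergence Φ μ κ) {w : E → ENNReal} (hw : Measurable w) {η : ℝ}
    (hwΦ : ∀ s, ∀ᵐ x ∂μ, w (Φ s x) = ENNReal.ofReal (Real.exp (η * s)) * w x) :
    HasDivergence Φ (μ.withDensity w) (κ + η) := by
  intro s
  have hΦs : Measurable (Φ s) := (Φ.continuous_toFun s).measurable
  have hw_eq : w =ᵐ[μ] fun x => ENNReal.ofReal (Real.exp (-(η * s))) * w (Φ s x) := by
    filter_upwards [hwΦ s] with x hx
    rw [hx, ← mul_assoc, ← ENNReal.ofReal_mul (Real.exp_pos _).le, ← Real.exp_add,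
      neg_add_cancel, Real.exp_zero, ENNReal.ofReal_one, one_mul]
  ext A hA
  have hpre : μ.withDensity w (Φ s ⁻¹' A) =
      ENNReal.ofReal (Real.exp (-(η * s))) * ∫⁻ x in Φ s ⁻¹' A, w (Φ s x) ∂μ := by
    rw [withDensity_congr_ae hw_eq, withDensity_apply _ (hΦs hA),
      lintegral_const_mul _ (show Measurable fun x => w (Φ s x) from hw.comp hΦs)]
  rw [Measure.map_apply hΦs hA, hpre, ← setLIntegral_map hA hw hΦs, hΦ, Measure.restrict_smul,
    lintegral_smul_measure, Measure.smul_apply, withDensity_apply _ hA, smul_eq_mul, smul_eq_mul,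
    ← mul_assoc, ← ENNReal.ofReal_mul (Real.exp_pos _).le, ← Real.exp_add]
  congr 3
  ring

section Average

variable [SecondCountableTopology E] [SFinite μ] {b g X : E → ℝ} {C S β : ℝ}

lemma integrable_prod_comp_neg (hΦ : HasDivergence Φ μ κ) (hX : Continuous X)
    (hXi : Integrable X μ) (s t : ℝ) :
    Integrable (fun z : ℝ × E => X (Φ (-z.1) z.2)) ((volume.restrict (Set.uIoc s t)).prod μ) := by
  have hcont : Continuous fun z : ℝ × E => X (Φ (-z.1) z.2) := by fun_prop
  rw [integrable_prod_iff hcont.aestronglyMeasurable]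
  refine ⟨.of_forall fun r => hΦ.integrable_comp (-r) hXi, ?_⟩
  have hnorm : ∀ r, ∫ x, ‖X (Φ (-r) x)‖ ∂μ = Real.exp (κ * r) * ∫ x, ‖X x‖ ∂μ := fun r => by
    rw [hΦ.integral_comp (-r) fun x => ‖X x‖, mul_neg, neg_neg]
  simp_rw [hnorm]
  exact (Continuous.intervalIntegrable (by fun_prop) s t).def'

lemma integrable_prod_mul_comp_neg (hΦ : HasDivergence Φ μ κ) (hb : Measurable b)
    (hbC : ∀ x, |b x| ≤ C) (hX : Continuous X) (hXi : Integrable X μ) (s t : ℝ) :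
    Integrable (fun z : ℝ × E => b z.2 * X (Φ (-z.1) z.2))
      ((volume.restrict (Set.uIoc s t)).prod μ) :=
  (hΦ.integrable_prod_comp_neg hX hXi s t).bdd_mul
    (hb.comp measurable_snd).aestronglyMeasurable (.of_forall fun z => hbC z.2)

/-- After the change of variables `x ↦ Φ (-s) x` the derivative falls on `g` alone, so that `b` need
not be differentiable. -/
lemma intervalIntegral_exp_mul_integral_comp_mul (hΦ : HasDivergence Φ μ κ) (hb : Measurable b)
    (hbC : ∀ x, |b x| ≤ C) (hgi : Integrable g μ) (hX : Continuous X) (hXi : Integrable X μ)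
    (hder : ∀ x s, HasDerivAt (fun t => g (Φ t x)) (X (Φ s x)) s) (S : ℝ) :
    ∫ s in (0 : ℝ)..S, Real.exp (κ * s) * ∫ x, b (Φ s x) * X x ∂μ =
      (∫ x, b x * g x ∂μ) - Real.exp (κ * S) * ∫ x, b (Φ S x) * g x ∂μ := by
  have hFTC : ∀ x, ∫ s in (0 : ℝ)..S, X (Φ (-s) x) = g x - g (Φ (-S) x) := fun x => by
    rw [intervalIntegral.integral_comp_neg fun s => X (Φ s x),
      intervalIntegral.integral_eq_sub_of_hasDerivAt (fun s _ => hder x s)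
        (Continuous.intervalIntegrable (by fun_prop) _ _), neg_zero, Φ.map_zero_apply]
  have hb_mul : ∀ {f}, Integrable f μ → Integrable (fun x => b x * f x) μ := fun hf =>
    hf.bdd_mul hb.aestronglyMeasurable (.of_forall hbC)
  simp_rw [hΦ.exp_mul_integral_comp_mul]
  rw [intervalIntegral_integral_swap (hΦ.integrable_prod_mul_comp_neg hb hbC hX hXi 0 S),
    ← integral_sub (hb_mul hgi) (hb_mul (hΦ.integrable_comp (-S) hgi))]
  simp_rw [intervalIntegral.integral_const_mul, hFTC, mul_sub]

lemma abs_expPrimitive_mul_integral_sub_le (hΦ : HasDivergence Φ μ κ) (hb : Measurable b)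
    (hbC : ∀ x, |b x| ≤ C) (hX : Continuous X) (hXi : Integrable X μ) (hS : 0 ≤ S)
    (hosc : ∀ s ∈ Set.Icc 0 S, ∀ᵐ x ∂μ, |b x - b (Φ s x)| ≤ β) :
    |expPrimitive κ S * (∫ x, b x * X x ∂μ) -
        ∫ s in (0 : ℝ)..S, Real.exp (κ * s) * ∫ x, b (Φ s x) * X x ∂μ| ≤
      expPrimitive κ S * (β * ∫ x, |X x| ∂μ) := by
  have havg : IntervalIntegrable (fun s => Real.exp (κ * s) * ∫ x, b (Φ s x) * X x ∂μ)
      volume 0 S := by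
    rw [intervalIntegrable_iff]
    simp_rw [hΦ.exp_mul_integral_comp_mul]
    exact (hΦ.integrable_prod_mul_comp_neg hb hbC hX hXi 0 S).integral_prod_left
  have hbX : ∀ s, Integrable (fun x => b (Φ s x) * X x) μ := fun s =>
    hXi.bdd_mul (hb.comp (Φ.continuous_toFun s).measurable).aestronglyMeasurable
      (.of_forall fun x => hbC (Φ s x))
  rw [expPrimitive, ← intervalIntegral.integral_mul_const, ← intervalIntegral.integral_mul_const,
    ← intervalIntegral.integral_sub (Continuous.intervalIntegrable (by fun_prop) _ _) havg,
    ← Real.norm_eq_abs]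
  refine intervalIntegral.norm_integral_le_of_norm_le hS (.of_forall fun s hs => ?_)
    (Continuous.intervalIntegrable (by fun_prop) _ _)
  rw [← mul_sub, norm_mul, Real.norm_eq_abs, Real.norm_eq_abs, Real.abs_exp]
  gcongr
  exact abs_integral_mul_sub_integral_mul_le (by simpa using hbX 0) (hbX s) hXi
    (hosc s ⟨hs.1.le, hs.2⟩)

/-- If `b` were constant along `Φ` the left-hand side would vanish, since `X + κ g` is the
divergence of `g` times the generator of `Φ`. -/
lemma abs_integral_mul_add_le (hΦ : HasDivergence Φ μ κ) (hb : Measurable b)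
    (hbC : ∀ x, |b x| ≤ C) (hgi : Integrable g μ) (hX : Continuous X) (hXi : Integrable X μ)
    (hder : ∀ x s, HasDerivAt (fun t => g (Φ t x)) (X (Φ s x)) s) (hS : 0 < S)
    (hosc : ∀ s ∈ Set.Icc 0 S, ∀ᵐ x ∂μ, |b x - b (Φ s x)| ≤ β) :
    |∫ x, b x * (X x + κ * g x) ∂μ| ≤
      β * ((∫ x, |X x| ∂μ) + Real.exp (κ * S) / expPrimitive κ S * ∫ x, |g x| ∂μ) := by
  have hc : 0 < expPrimitive κ S := expPrimitive_pos κ hS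
  have hcomp_mul : ∀ s {f}, Integrable f μ → Integrable (fun x => b (Φ s x) * f x) μ :=
    fun s _ hf => hf.bdd_mul (hb.comp (Φ.continuous_toFun s).measurable).aestronglyMeasurable
      (.of_forall fun x => hbC (Φ s x))
  have hb_mul : ∀ {f}, Integrable f μ → Integrable (fun x => b x * f x) μ := fun hf =>
    hf.bdd_mul hb.aestronglyMeasurable (.of_forall hbC)
  have hX_avg := hΦ.abs_expPrimitive_mul_integral_sub_le hb hbC hX hXi hS.le hosc
  rw [hΦ.intervalIntegral_exp_mul_integral_comp_mul hb hbC hgi hX hXi hder] at hX_avg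
  have hg_osc := abs_integral_mul_sub_integral_mul_le (hb_mul hgi) (hcomp_mul S hgi) hgi
    (hosc S ⟨hS.le, le_rfl⟩)
  have hsplit : ∫ x, b x * (X x + κ * g x) ∂μ =
      (∫ x, b x * X x ∂μ) + κ * ∫ x, b x * g x ∂μ := by
    rw [← integral_const_mul, ← integral_add (hb_mul hXi) ((hb_mul hgi).const_mul κ)]
    simp_rw [mul_add, mul_left_comm]
  rw [hsplit]
  set bX := ∫ x, b x * X x ∂μ
  set bg := ∫ x, b x * g x ∂μ
  set bgS := ∫ x, b (Φ S x) * g x ∂μ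
  refine le_of_mul_le_mul_left ?_ hc
  calc expPrimitive κ S * |bX + κ * bg|
      = |(expPrimitive κ S * bX - (bg - Real.exp (κ * S) * bgS)) +
          Real.exp (κ * S) * (bg - bgS)| := by
        rw [← abs_of_pos hc, ← abs_mul, abs_of_pos hc]
        congr 1
        linear_combination bg * mul_expPrimitive κ S
    _ ≤ |expPrimitive κ S * bX - (bg - Real.exp (κ * S) * bgS)| +
          Real.exp (κ * S) * |bg - bgS| := by
        refine (abs_add_le _ _).trans_eq ?_
        rw [abs_mul, Real.abs_exp]
    _ ≤ expPrimitive κ S * (β * ∫ x, |X x| ∂μ) +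
          Real.exp (κ * S) * (β * ∫ x, |g x| ∂μ) := by gcongr
    _ = _ := by field_simp

end Average

end HasDivergence

section RankOneFlow

variable {E : Type*} [NormedAddCommGroup E] [NormedSpace ℝ E]

/-- The flow of the linear vector field `x ↦ φ x • v`. It preserves the half-space `{φ > 0}` and
moves its points by distances comparable to `φ`. -/
noncomputable def rankOneFlow (φ : E →L[ℝ] ℝ) (v : E) : Flow ℝ E where
  toFun s x := x + (expPrimitive (φ v) s * φ x) • v
  cont' := by
    simp only [Function.uncurry_def]
    fun_prop
  map_add' s t x := by
    simp only [map_add, map_smul, smul_eq_mul, add_assoc, ← add_smul, expPrimitive_add]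
    congr 2
    linear_combination -(expPrimitive (φ v) s * φ x) * mul_expPrimitive (φ v) t
  map_zero' x := by simp

variable (φ : E →L[ℝ] ℝ) (v : E)

lemma rankOneFlow_apply (s : ℝ) (x : E) :
    rankOneFlow φ v s x = x + (expPrimitive (φ v) s * φ x) • v :=
  rfl

lemma map_rankOneFlow (s : ℝ) (x : E) :
    φ (rankOneFlow φ v s x) = Real.exp (φ v * s) * φ x := by
  simp only [rankOneFlow_apply, map_add, map_smul, smul_eq_mul]
  linear_combination φ x * mul_expPrimitive (φ v) s

lemma hasDerivAt_rankOneFlow (s : ℝ) (x : E) :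
    HasDerivAt (fun t => rankOneFlow φ v t x) (φ (rankOneFlow φ v s x) • v) s := by
  rw [map_rankOneFlow]
  exact (((hasDerivAt_expPrimitive (φ v) s).mul_const (φ x)).smul_const v).const_add x

lemma isInvariant_rankOneFlow : IsInvariant (rankOneFlow φ v) {x | 0 < φ x} := by
  intro s x hx
  simpa only [Set.mem_ofPred_eq, map_rankOneFlow, mul_pos_iff_of_pos_left (Real.exp_pos _)] using hx

lemma exists_forall_dist_rankOneFlow_le {ε : ℝ} (hε : 0 < ε) :
    ∃ S > 0, ∀ s ∈ Set.Icc 0 S, ∀ x, 0 < φ x →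
      dist x (rankOneFlow φ v s x) ≤ ε * min (φ x) (φ (rankOneFlow φ v s x)) := by
  have hcont : Continuous fun s =>
      ε * min 1 (Real.exp (φ v * s)) - |expPrimitive (φ v) s| * ‖v‖ := by fun_prop
  have hnear : ∀ᶠ s in nhds (0 : ℝ),
      0 < ε * min 1 (Real.exp (φ v * s)) - |expPrimitive (φ v) s| * ‖v‖ :=
    hcont.continuousAt.eventually_const_lt (by simpa using hε)
  obtain ⟨δ, hδ, hball⟩ := Metric.eventually_nhds_iff.1 hnear
  refine ⟨δ / 2, half_pos hδ, fun s hs x hx => ?_⟩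
  have hs_small : |expPrimitive (φ v) s| * ‖v‖ ≤ ε * min 1 (Real.exp (φ v * s)) := by
    refine (sub_pos.1 (hball ?_)).le
    rw [Real.dist_0_eq_abs, abs_of_nonneg hs.1]
    linarith [hs.2]
  calc dist x (rankOneFlow φ v s x)
      = |expPrimitive (φ v) s| * ‖v‖ * φ x := by
        rw [rankOneFlow_apply, dist_self_add_right, norm_smul, norm_mul, Real.norm_eq_abs,
          Real.norm_of_nonneg hx.le, mul_right_comm]
    _ ≤ ε * min 1 (Real.exp (φ v * s)) * φ x := by gcongr
    _ = ε * min (φ x) (φ (rankOneFlow φ v s x)) := by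
        rw [map_rankOneFlow, mul_assoc, min_mul_of_nonneg _ _ hx.le, one_mul]

variable [FiniteDimensional ℝ E] [MeasurableSpace E] [BorelSpace E]

lemma hasDivergence_rankOneFlow (μ : Measure E) [μ.IsAddHaarMeasure] :
    HasDivergence (rankOneFlow φ v) μ (φ v) := by
  intro s
  have hlin : rankOneFlow φ v s =
      LinearMap.transvection (expPrimitive (φ v) s • φ.toLinearMap) v := by
    funext x
    simp [rankOneFlow_apply, LinearMap.transvection.apply]
  have hdet : LinearMap.det (LinearMap.transvection (expPrimitive (φ v) s • φ.toLinearMap) v) =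
      Real.exp (φ v * s) := by
    simp only [LinearMap.transvection.det, LinearMap.smul_apply, ContinuousLinearMap.coe_coe,
      smul_eq_mul]
    linear_combination mul_expPrimitive (φ v) s
  rw [hlin, Measure.map_linearMap_addHaar_eq_smul_addHaar _ (hdet ▸ (Real.exp_pos _).ne'), hdet,
    Real.exp_neg, abs_of_pos (inv_pos.2 (Real.exp_pos _))]

end RankOneFlow

section HalfSpace

variable {E : Type*} [NormedAddCommGroup E] [NormedSpace ℝ E] [MeasurableSpace E]

/-- The measure `φ^{γ-1} dμ` on the half-space `{φ > 0}`. The exponent is shifted so that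
the vector field `x ↦ φ x • v` has divergence `γ * φ v` with respect to it. -/
noncomputable def halfSpaceMeasure (μ : Measure E) (φ : E →L[ℝ] ℝ) (γ : ℝ) : Measure E :=
  (μ.restrict {x | 0 < φ x}).withDensity fun x => ENNReal.ofReal (φ x ^ (γ - 1))

variable {μ : Measure E} {φ : E →L[ℝ] ℝ} {γ : ℝ}

instance [SFinite μ] : SFinite (halfSpaceMeasure μ φ γ) := by
  unfold halfSpaceMeasure
  infer_instance

variable [BorelSpace E]

lemma measurableSet_halfSpace (φ : E →L[ℝ] ℝ) : MeasurableSet {x | 0 < φ x} :=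
  (isOpen_lt continuous_const φ.continuous).measurableSet

lemma measurable_halfSpace_density (φ : E →L[ℝ] ℝ) (γ : ℝ) :
    Measurable fun x => ENNReal.ofReal (φ x ^ (γ - 1)) :=
  (φ.measurable.pow_const _).ennreal_ofReal

lemma ae_pos_halfSpaceMeasure : ∀ᵐ x ∂halfSpaceMeasure μ φ γ, 0 < φ x :=
  (withDensity_absolutelyContinuous _ _).ae_le (ae_restrict_mem (measurableSet_halfSpace φ))

lemma integral_halfSpaceMeasure (f : E → ℝ) :
    ∫ x, f x ∂halfSpaceMeasure μ φ γ = ∫ x in {x | 0 < φ x}, φ x ^ (γ - 1) * f x ∂μ := by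
  rw [halfSpaceMeasure, integral_withDensity_eq_integral_toReal_smul
    (measurable_halfSpace_density φ γ) (.of_forall fun _ => ENNReal.ofReal_lt_top)]
  refine setIntegral_congr_fun (measurableSet_halfSpace φ) fun x hx => ?_
  rw [ENNReal.toReal_ofReal (Real.rpow_nonneg (le_of_lt hx) _), smul_eq_mul]

lemma integrable_halfSpaceMeasure [IsFiniteMeasureOnCompacts μ] {f : E → ℝ} (hf : Continuous f)
    (hfc : HasCompactSupport f) (hfφ : tsupport f ⊆ {x | 0 < φ x}) :
    Integrable f (halfSpaceMeasure μ φ γ) := by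
  have hsupp : tsupport (fun x => φ x ^ (γ - 1) * f x) ⊆ tsupport f := tsupport_mul_subset_right
  have hcont : Continuous fun x => φ x ^ (γ - 1) * f x :=
    continuous_of_tsupport fun x hx =>
      (φ.continuous.continuousAt.rpow_const (.inl (ne_of_gt (hfφ (hsupp hx))))).mul
        hf.continuousAt
  rw [halfSpaceMeasure, integrable_withDensity_iff_integrable_smul'
    (measurable_halfSpace_density φ γ) (.of_forall fun _ => ENNReal.ofReal_lt_top)]
  refine (hcont.integrable_of_hasCompactSupport hfc.mul_left).integrableOn.congr_fun
    (fun x hx => ?_) (measurableSet_halfSpace φ)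
  rw [ENNReal.toReal_ofReal (Real.rpow_nonneg (le_of_lt hx) _), smul_eq_mul]

lemma hasDivergence_rankOneFlow_halfSpaceMeasure [FiniteDimensional ℝ E] [μ.IsAddHaarMeasure]
    (v : E) : HasDivergence (rankOneFlow φ v) (halfSpaceMeasure μ φ γ) (γ * φ v) := by
  have hweight : ∀ s, ∀ᵐ x ∂μ.restrict {x | 0 < φ x},
      ENNReal.ofReal (φ (rankOneFlow φ v s x) ^ (γ - 1)) =
        ENNReal.ofReal (Real.exp ((γ - 1) * φ v * s)) * ENNReal.ofReal (φ x ^ (γ - 1)) := by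
    intro s
    filter_upwards [ae_restrict_mem (measurableSet_halfSpace φ)] with x hx
    rw [← ENNReal.ofReal_mul (Real.exp_pos _).le, map_rankOneFlow,
      Real.mul_rpow (Real.exp_pos _).le (le_of_lt hx), ← Real.exp_mul]
    congr 3
    ring
  have h := ((hasDivergence_rankOneFlow φ v μ).restrict (measurableSet_halfSpace φ)
    (isInvariant_rankOneFlow φ v)).withDensity (measurable_halfSpace_density φ γ) hweight
  rwa [show φ v + (γ - 1) * φ v = γ * φ v by ring] at h

end HalfSpace

section Oscillation

variable {E F G : Type*} [NormedAddCommGroup E] [NormedSpace ℝ E] [NormedAddCommGroup F]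
  [NormedSpace ℝ F] [NormedAddCommGroup G] [NormedSpace ℝ G]

/-- The oscillation of `a` is at most `β` at scales below `ε` times the distance to the boundary of
the half-space `{φ > 0}`, that distance being measured by `φ`. -/
def WhitneyOscLE (φ : E →L[ℝ] ℝ) (ε β : ℝ) (a : E → F) : Prop :=
  ∀ x y, 0 < φ x → 0 < φ y → dist x y ≤ ε * min (φ x) (φ y) → ‖a x - a y‖ ≤ β

lemma WhitneyOscLE.clm_comp {φ : E →L[ℝ] ℝ} {ε β : ℝ} {a : E → F} (ha : WhitneyOscLE φ ε β a)
    (L : F →L[ℝ] G) : WhitneyOscLE φ ε (‖L‖ * β) fun x => L (a x) := by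
  intro x y hx hy hxy
  rw [← map_sub]
  exact L.le_opNorm_of_le (ha x y hx hy hxy)

end Oscillation

section VectorField

variable {E : Type*} [NormedAddCommGroup E] [NormedSpace ℝ E]

/-- The space `C_c¹({φ > 0})` of admissible functions: continuously differentiable with compact
support in the open half-space `{φ > 0}`. -/
structure IsHalfSpaceTestFunction (φ : E →L[ℝ] ℝ) (g : E → ℝ) : Prop where
  contDiff : ContDiff ℝ 1 g
  hasCompactSupport : HasCompactSupport g
  tsupport_subset : tsupport g ⊆ {x | 0 < φ x}

/-- The differential of `φ^γ g` divided by `φ^{γ-1}`. Integrated against `φ^{γ-1} dμ` over the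
half-space and applied to a constant vector it gives zero, for test functions `g`. -/
noncomputable def weightedFDeriv (φ : E →L[ℝ] ℝ) (γ : ℝ) (g : E → ℝ) (x : E) : E →L[ℝ] ℝ :=
  φ x • fderiv ℝ g x + (γ * g x) • φ

variable {φ : E →L[ℝ] ℝ} {γ ε : ℝ}

lemma weightedFDeriv_apply (g : E → ℝ) (x v : E) :
    weightedFDeriv φ γ g x v = φ x * fderiv ℝ g x v + γ * φ v * g x := by
  simp only [weightedFDeriv, add_apply, smul_apply,
    smul_eq_mul]
  ring

lemma fderiv_abs_rpow_apply {p : ℝ} (hp : 1 < p) {u : E → ℝ} (hu : Differentiable ℝ u) (x v : E) :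
    fderiv ℝ (fun y => |u y| ^ p) x v = p * |u x| ^ (p - 2) * u x * fderiv ℝ u x v := by
  have h : HasFDerivAt (fun y => |u y| ^ p) ((p * |u x| ^ (p - 2) * u x) • fderiv ℝ u x) x :=
    (hasDerivAt_abs_rpow (u x) hp).comp_hasFDerivAt x (hu x).hasFDerivAt
  rw [h.fderiv, smul_apply, smul_eq_mul]

lemma rpow_sub_one_mul_le {p a b : ℝ} (hp : 1 ≤ p) (ha : 0 ≤ a) (hb : 0 ≤ b) :
    a ^ (p - 1) * b ≤ a ^ p + b ^ p := by
  have hm : 0 ≤ max a b := le_max_of_le_left ha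
  calc a ^ (p - 1) * b ≤ max a b ^ (p - 1) * max a b := by
        have : 0 ≤ p - 1 := sub_nonneg.2 hp
        gcongr
        · exact le_max_left a b
        · exact le_max_right a b
    _ = max a b ^ p := by
        rw [← Real.rpow_add_one' hm (by linarith), sub_add_cancel]
    _ ≤ a ^ p + b ^ p := by
        rcases max_choice a b with h | h <;> rw [h]
        · exact le_add_of_nonneg_right (Real.rpow_nonneg hb p)
        · exact le_add_of_nonneg_left (Real.rpow_nonneg ha p)

lemma mul_norm_fderiv_abs_rpow_le {p : ℝ} (hp : 1 < p) {u : E → ℝ} (hu : Differentiable ℝ u)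
    {t : ℝ} (ht : 0 ≤ t) (x : E) :
    t * ‖fderiv ℝ (fun y => |u y| ^ p) x‖ ≤ p * (|u x| ^ p + (t * ‖fderiv ℝ u x‖) ^ p) :=
  calc t * ‖fderiv ℝ (fun y => |u y| ^ p) x‖
      ≤ t * (p * |u x| ^ (p - 1) * ‖fderiv ℝ u x‖) := by
        gcongr
        simpa only [Real.norm_eq_abs] using norm_fderiv_norm_rpow_le hu (x := x) hp
    _ = p * (|u x| ^ (p - 1) * (t * ‖fderiv ℝ u x‖)) := by ring
    _ ≤ _ := by
        gcongr
        exact rpow_sub_one_mul_le hp.le (abs_nonneg _) (by positivity)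

namespace IsHalfSpaceTestFunction

variable {g u : E → ℝ}

lemma abs_rpow (hu : IsHalfSpaceTestFunction φ u) {p : ℝ} (hp : 1 < p) :
    IsHalfSpaceTestFunction φ fun x => |u x| ^ p := by
  have hsupp : Function.support (fun x => |u x| ^ p) ⊆ Function.support u := fun x hx hux =>
    hx (by simp only [hux, abs_zero, Real.zero_rpow (zero_lt_one.trans hp).ne'])
  exact ⟨hu.contDiff.norm_rpow hp, hu.hasCompactSupport.mono hsupp,
    (closure_mono hsupp).trans hu.tsupport_subset⟩

lemma continuous_fderiv (hg : IsHalfSpaceTestFunction φ g) : Continuous (fderiv ℝ g) :=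
  hg.contDiff.continuous_fderiv one_ne_zero

lemma continuous_mul_fderiv_apply (hg : IsHalfSpaceTestFunction φ g) (v : E) :
    Continuous fun x => φ x * fderiv ℝ g x v :=
  φ.continuous.mul (hg.continuous_fderiv.clm_apply continuous_const)

lemma hasDerivAt_comp_rankOneFlow (hg : IsHalfSpaceTestFunction φ g) (v x : E) (s : ℝ) :
    HasDerivAt (fun t => g (rankOneFlow φ v t x))
      (φ (rankOneFlow φ v s x) * fderiv ℝ g (rankOneFlow φ v s x) v) s := by
  rw [← smul_eq_mul, ← map_smul]
  exact (hg.contDiff.differentiable one_ne_zero _).hasFDerivAt.comp_hasDerivAt s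
    (hasDerivAt_rankOneFlow φ v s x)

variable [MeasurableSpace E] [BorelSpace E] {μ : Measure E}

lemma integrable_of_eq_zero [IsFiniteMeasureOnCompacts μ] (hg : IsHalfSpaceTestFunction φ g)
    {f : E → ℝ} (hf : Continuous f) (hfg : ∀ x, g x = 0 → fderiv ℝ g x = 0 → f x = 0) :
    Integrable f (halfSpaceMeasure μ φ γ) := by
  have hsupp : Function.support f ⊆ tsupport g := by
    intro x hx
    by_contra hxg
    exact hx (hfg x (image_eq_zero_of_notMem_tsupport hxg)
      (image_eq_zero_of_notMem_tsupport fun h => hxg (tsupport_fderiv_subset ℝ h)))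
  exact integrable_halfSpaceMeasure hf (hg.hasCompactSupport.mono' hsupp)
    ((closure_minimal hsupp (isClosed_tsupport g)).trans hg.tsupport_subset)

lemma integrable [IsFiniteMeasureOnCompacts μ] (hg : IsHalfSpaceTestFunction φ g) :
    Integrable g (halfSpaceMeasure μ φ γ) :=
  hg.integrable_of_eq_zero hg.contDiff.continuous fun _ h _ => h

lemma integrable_mul_fderiv_apply [IsFiniteMeasureOnCompacts μ] (hg : IsHalfSpaceTestFunction φ g)
    (v : E) : Integrable (fun x => φ x * fderiv ℝ g x v) (halfSpaceMeasure μ φ γ) :=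
  hg.integrable_of_eq_zero (hg.continuous_mul_fderiv_apply v) fun x _ h => by
    rw [h, zero_apply, mul_zero]

lemma integrable_weightedFDeriv_apply [IsFiniteMeasureOnCompacts μ]
    (hg : IsHalfSpaceTestFunction φ g) (v : E) :
    Integrable (fun x => weightedFDeriv φ γ g x v) (halfSpaceMeasure μ φ γ) := by
  simp only [weightedFDeriv_apply]
  exact (hg.integrable_mul_fderiv_apply v).add (hg.integrable.const_mul _)

lemma integrable_mul_norm_fderiv [IsFiniteMeasureOnCompacts μ]
    (hg : IsHalfSpaceTestFunction φ g) :
    Integrable (fun x => φ x * ‖fderiv ℝ g x‖) (halfSpaceMeasure μ φ γ) :=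
  hg.integrable_of_eq_zero (φ.continuous.mul hg.continuous_fderiv.norm) fun x _ h => by
    rw [h, norm_zero, mul_zero]

lemma integrable_rpow_mul_norm_fderiv [IsFiniteMeasureOnCompacts μ]
    (hg : IsHalfSpaceTestFunction φ g) {p : ℝ} (hp : 0 < p) :
    Integrable (fun x => (φ x * ‖fderiv ℝ g x‖) ^ p) (halfSpaceMeasure μ φ γ) :=
  hg.integrable_of_eq_zero
    ((φ.continuous.mul hg.continuous_fderiv.norm).rpow_const fun _ => .inr hp.le) fun x _ h => by
      rw [h, norm_zero, mul_zero, Real.zero_rpow hp.ne']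

lemma integral_abs_mul_fderiv_apply_add_le [IsFiniteMeasureOnCompacts μ]
    (hg : IsHalfSpaceTestFunction φ g) (v : E) {K : ℝ} (hK : 0 ≤ K) :
    (∫ x, |φ x * fderiv ℝ g x v| ∂halfSpaceMeasure μ φ γ) +
        K * ∫ x, |g x| ∂halfSpaceMeasure μ φ γ ≤
      (‖v‖ + K) * ∫ x, (φ x * ‖fderiv ℝ g x‖ + |g x|) ∂halfSpaceMeasure μ φ γ := by
  have hDg := (hg.integrable_mul_fderiv_apply (μ := μ) (γ := γ) v).abs
  have hKg := (hg.integrable (μ := μ) (γ := γ)).abs.const_mul K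
  rw [← integral_const_mul, ← integral_const_mul, ← integral_add hDg hKg]
  refine integral_mono_ae (hDg.add hKg)
    ((hg.integrable_mul_norm_fderiv.add hg.integrable.abs).const_mul _) ?_
  filter_upwards [ae_pos_halfSpaceMeasure] with x hx
  have hDv : |φ x * fderiv ℝ g x v| ≤ ‖v‖ * (φ x * ‖fderiv ℝ g x‖) := by
    rw [abs_mul, abs_of_pos hx, mul_left_comm, mul_comm ‖v‖]
    exact mul_le_mul_of_nonneg_left ((fderiv ℝ g x).le_opNorm v) hx.le
  have hcross : 0 ≤ ‖v‖ * |g x| + K * (φ x * ‖fderiv ℝ g x‖) := by positivity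
  linarith

variable [FiniteDimensional ℝ E]

lemma integrable_clm_apply [IsFiniteMeasureOnCompacts μ] (hg : IsHalfSpaceTestFunction φ g)
    {L : E → E →L[ℝ] ℝ} (hL : Continuous L) (hLg : ∀ x, g x = 0 → fderiv ℝ g x = 0 → L x = 0)
    {a : E → E} (ha : Measurable a) {C : ℝ} (haC : ∀ x, ‖a x‖ ≤ C) :
    Integrable (fun x => L x (a x)) (halfSpaceMeasure μ φ γ) := by
  have hnorm : Integrable (fun x => ‖L x‖) (halfSpaceMeasure μ φ γ) :=
    hg.integrable_of_eq_zero hL.norm fun x h h' => by rw [hLg x h h', norm_zero]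
  refine (hnorm.mul_const C).mono' ?_ (.of_forall fun x => (L x).le_opNorm_of_le (haC x))
  exact isBoundedBilinearMap_apply.continuous.comp_aestronglyMeasurable
    (hL.aestronglyMeasurable.prodMk ha.aestronglyMeasurable)

end IsHalfSpaceTestFunction

variable [FiniteDimensional ℝ E] [MeasurableSpace E] [BorelSpace E] {μ : Measure E}
  [μ.IsAddHaarMeasure]

lemma integral_weightedFDeriv_abs_rpow {p : ℝ} (hp : 1 < p) {u : E → ℝ}
    (hu : IsHalfSpaceTestFunction φ u) {a : E → E} (ha : Measurable a) {C : ℝ}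
    (haC : ∀ x, ‖a x‖ ≤ C) :
    ∫ x, weightedFDeriv φ γ (fun y => |u y| ^ p) x (a x) ∂halfSpaceMeasure μ φ γ =
      p * ((∫ x in {x | 0 < φ x}, φ x ^ γ * |u x| ^ (p - 2) * u x * fderiv ℝ u x (a x) ∂μ) +
        p⁻¹ * γ * ∫ x in {x | 0 < φ x}, φ (a x) * φ x ^ (γ - 1) * |u x| ^ p ∂μ) := by
  have hg := hu.abs_rpow hp
  have hp0 : p ≠ 0 := (zero_lt_one.trans hp).ne'
  have hdiff : Differentiable ℝ u := hu.contDiff.differentiable one_ne_zero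
  have hderiv_int : Integrable (fun x => (φ x • fderiv ℝ (fun y => |u y| ^ p) x) (a x))
      (halfSpaceMeasure μ φ γ) :=
    hg.integrable_clm_apply (L := fun x => φ x • fderiv ℝ (fun y => |u y| ^ p) x)
      (φ.continuous.smul hg.continuous_fderiv)
      (fun x _ h => by rw [h, smul_zero]) ha haC
  have hzero_int : Integrable (fun x => ((γ * |u x| ^ p) • φ) (a x)) (halfSpaceMeasure μ φ γ) :=
    hg.integrable_clm_apply (L := fun x => (γ * |u x| ^ p) • φ)
      ((continuous_const.mul hg.contDiff.continuous).smul continuous_const)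
      (fun x h _ => by rw [h, mul_zero, zero_smul]) ha haC
  simp only [weightedFDeriv, add_apply]
  rw [integral_add hderiv_int hzero_int, integral_halfSpaceMeasure, integral_halfSpaceMeasure,
    mul_add, ← mul_assoc p, mul_inv_cancel_left₀ hp0, ← integral_const_mul, ← integral_const_mul]
  congr 1 <;> refine setIntegral_congr_fun (measurableSet_halfSpace φ) fun x hx => ?_
  · have hpow : φ x ^ γ = φ x ^ (γ - 1) * φ x := by
      rw [← Real.rpow_add_one (ne_of_gt hx), sub_add_cancel]
    simp only [smul_apply, smul_eq_mul, fderiv_abs_rpow_apply hp hdiff, hpow]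
    ring
  · simp only [smul_apply, smul_eq_mul]
    ring

variable (μ φ γ)

lemma exists_abs_integral_mul_weightedFDeriv_le (hε : 0 < ε) (v : E) :
    ∃ N ≥ 0, ∀ β ≥ 0, ∀ b : E → ℝ, Measurable b → (∃ C, ∀ x, |b x| ≤ C) → WhitneyOscLE φ ε β b →
      ∀ g, IsHalfSpaceTestFunction φ g →
        |∫ x, b x * weightedFDeriv φ γ g x v ∂halfSpaceMeasure μ φ γ| ≤
          N * β * ∫ x, (φ x * ‖fderiv ℝ g x‖ + |g x|) ∂halfSpaceMeasure μ φ γ := by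
  obtain ⟨S, hS, hdist⟩ := exists_forall_dist_rankOneFlow_le φ v hε
  set K := Real.exp (γ * φ v * S) / expPrimitive (γ * φ v) S
  have hK : 0 ≤ K := div_nonneg (Real.exp_pos _).le (expPrimitive_pos _ hS).le
  refine ⟨‖v‖ + K, by positivity, fun β hβ b hb ⟨C, hbC⟩ hosc g hg => ?_⟩
  have hosc_flow : ∀ s ∈ Set.Icc 0 S, ∀ᵐ x ∂halfSpaceMeasure μ φ γ,
      |b x - b (rankOneFlow φ v s x)| ≤ β := by
    intro s hs
    filter_upwards [ae_pos_halfSpaceMeasure] with x hx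
    exact hosc x _ hx (isInvariant_rankOneFlow φ v s hx) (hdist s hs x hx)
  have hflow := (hasDivergence_rankOneFlow_halfSpaceMeasure v).abs_integral_mul_add_le hb hbC
    hg.integrable (hg.continuous_mul_fderiv_apply v) (hg.integrable_mul_fderiv_apply v)
    (hg.hasDerivAt_comp_rankOneFlow v) hS hosc_flow
  have hbound := hg.integral_abs_mul_fderiv_apply_add_le (μ := μ) (γ := γ) v hK
  simp only [weightedFDeriv_apply]
  exact hflow.trans ((mul_le_mul_of_nonneg_left hbound hβ).trans_eq (by ring))

lemma exists_abs_integral_weightedFDeriv_le (hε : 0 < ε) :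
    ∃ N ≥ 0, ∀ β ≥ 0, ∀ a : E → E, Measurable a → (∃ C, ∀ x, ‖a x‖ ≤ C) → WhitneyOscLE φ ε β a →
      ∀ g, IsHalfSpaceTestFunction φ g →
        |∫ x, weightedFDeriv φ γ g x (a x) ∂halfSpaceMeasure μ φ γ| ≤
          N * β * ∫ x, (φ x * ‖fderiv ℝ g x‖ + |g x|) ∂halfSpaceMeasure μ φ γ := by
  let B := Module.finBasis ℝ E
  let coord := fun i => (B.coord i).toContinuousLinearMap
  choose N hN hest using fun i => exists_abs_integral_mul_weightedFDeriv_le φ γ μ hε (B i)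
  refine ⟨∑ i, N i * ‖coord i‖, sum_nonneg fun i _ => mul_nonneg (hN i) (norm_nonneg _),
    fun β hβ a ha ⟨C, haC⟩ hosc g hg => ?_⟩
  have hcoord : ∀ i, Measurable fun x => coord i (a x) := fun i =>
    (coord i).measurable.comp ha
  have hcoord_le : ∀ i x, |coord i (a x)| ≤ ‖coord i‖ * C := fun i x =>
    (coord i).le_opNorm_of_le (haC x)
  have hsum : ∀ x, weightedFDeriv φ γ g x (a x) =
      ∑ i, coord i (a x) * weightedFDeriv φ γ g x (B i) := fun x => by
    conv_lhs => rw [← B.sum_repr (a x)]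
    simp only [map_sum, map_smul, smul_eq_mul]
    rfl
  have hint : ∀ i, Integrable (fun x => coord i (a x) * weightedFDeriv φ γ g x (B i))
      (halfSpaceMeasure μ φ γ) := fun i =>
    (hg.integrable_weightedFDeriv_apply (B i)).bdd_mul (hcoord i).aestronglyMeasurable
      (.of_forall (hcoord_le i))
  simp_rw [hsum]
  rw [integral_finsetSum _ fun i _ => hint i, sum_mul, sum_mul]
  refine (abs_sum_le_sum_abs _ _).trans (sum_le_sum fun i _ => ?_)
  rw [mul_assoc (N i)]
  exact hest i (‖coord i‖ * β) (by positivity) _ (hcoord i) ⟨_, hcoord_le i⟩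
    (hosc.clm_comp (coord i)) g hg

lemma exists_abs_integral_weightedFDeriv_abs_rpow_le {p : ℝ} (hp : 1 < p) (hε : 0 < ε) :
    ∃ N ≥ 0, ∀ β ≥ 0, ∀ a : E → E, Measurable a → (∃ C, ∀ x, ‖a x‖ ≤ C) → WhitneyOscLE φ ε β a →
      ∀ u, IsHalfSpaceTestFunction φ u →
        |∫ x, weightedFDeriv φ γ (fun y => |u y| ^ p) x (a x) ∂halfSpaceMeasure μ φ γ| ≤
          N * β * ∫ x, (|u x| ^ p + (φ x * ‖fderiv ℝ u x‖) ^ p) ∂halfSpaceMeasure μ φ γ := by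
  have hp0 : 0 < p := zero_lt_one.trans hp
  obtain ⟨N, hN, hest⟩ := exists_abs_integral_weightedFDeriv_le φ γ μ hε
  refine ⟨N * (p + 1), by positivity, fun β hβ a ha hbdd hosc u hu => ?_⟩
  have hg := hu.abs_rpow hp
  refine (hest β hβ a ha hbdd hosc _ hg).trans ?_
  rw [mul_right_comm N (p + 1), mul_assoc (N * β), ← integral_const_mul (p + 1)]
  refine mul_le_mul_of_nonneg_left ?_ (by positivity)
  refine integral_mono_ae (hg.integrable_mul_norm_fderiv.add hg.integrable.abs)
    ((hg.integrable.add (hu.integrable_rpow_mul_norm_fderiv hp0)).const_mul _) ?_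
  filter_upwards [ae_pos_halfSpaceMeasure] with x hx
  have hyoung := mul_norm_fderiv_abs_rpow_le hp (hu.contDiff.differentiable one_ne_zero) hx.le x
  have hDu_rpow : 0 ≤ (φ x * ‖fderiv ℝ u x‖) ^ p := by positivity
  rw [abs_of_nonneg (by positivity)]
  linarith

lemma exists_abs_setIntegral_rpow_add_le {p : ℝ} (hp : 1 < p) (hε : 0 < ε) :
    ∃ N > 0, ∀ β ≥ 0, ∀ a : E → E, Measurable a → (∃ C, ∀ x, ‖a x‖ ≤ C) → WhitneyOscLE φ ε β a →
      ∀ u, IsHalfSpaceTestFunction φ u →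
        |(∫ x in {x | 0 < φ x}, φ x ^ γ * |u x| ^ (p - 2) * u x * fderiv ℝ u x (a x) ∂μ) +
            p⁻¹ * γ * ∫ x in {x | 0 < φ x}, φ (a x) * φ x ^ (γ - 1) * |u x| ^ p ∂μ| ≤
          N * β * ∫ x, (|u x| ^ p + (φ x * ‖fderiv ℝ u x‖) ^ p) ∂halfSpaceMeasure μ φ γ := by
  have hp0 : 0 < p := zero_lt_one.trans hp
  obtain ⟨N, hN, hest⟩ := exists_abs_integral_weightedFDeriv_abs_rpow_le φ γ μ hp hε
  refine ⟨N + 1, by positivity, fun β hβ a ha ⟨C, haC⟩ hosc u hu => ?_⟩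
  have h := hest β hβ a ha ⟨C, haC⟩ hosc u hu
  rw [integral_weightedFDeriv_abs_rpow hp hu ha haC, abs_mul, abs_of_pos hp0] at h
  have hI : 0 ≤ ∫ x, (|u x| ^ p + (φ x * ‖fderiv ℝ u x‖) ^ p) ∂halfSpaceMeasure μ φ γ := by
    refine integral_nonneg_of_ae ?_
    filter_upwards [ae_pos_halfSpaceMeasure] with x hx
    positivity
  refine (le_mul_of_one_le_left (abs_nonneg _) hp.le).trans (h.trans ?_)
  gcongr
  exact le_add_of_nonneg_right zero_le_one

end VectorField

section EuclideanHalfSpace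

variable {d : ℕ} {p : ℝ}

lemma sum_mul_clm_single (L : EuclideanSpace ℝ (Fin d) →L[ℝ] ℝ) (a : Fin d → ℝ) :
    ∑ i, a i * L (EuclideanSpace.single i 1) = L (WithLp.toLp 2 a) := by
  have hrepr := (EuclideanSpace.basisFun (Fin d) ℝ).sum_repr (WithLp.toLp 2 a)
  simp only [EuclideanSpace.basisFun_repr, EuclideanSpace.basisFun_apply] at hrepr
  rw [← hrepr]
  simp only [map_sum, map_smul, smul_eq_mul]

lemma exists_norm_toLp_le [NeZero d] {α : Type*} {a : α → Fin d → ℝ}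
    (ha : ∃ C, ∀ x i, |a x i| ≤ C) : ∃ C, ∀ x, ‖WithLp.toLp 2 (a x)‖ ≤ C := by
  obtain ⟨C, hC⟩ := ha
  exact ⟨_, fun x => (EuclideanSpace.equiv (Fin d) ℝ).symm.toContinuousLinearMap.le_opNorm_of_le
    ((pi_norm_le_iff_of_nonempty _).2 (hC x))⟩

variable [NeZero d]

lemma integral_rpow_mul_abs_rpow_nonneg (p θ : ℝ) (f : EuclideanSpace ℝ (Fin d) → ℝ) :
    0 ≤ ∫ x in {x : EuclideanSpace ℝ (Fin d) | 0 < x 0}, x 0 ^ (θ - d) * |f x| ^ p :=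
  setIntegral_nonneg (measurableSet_halfSpace (EuclideanSpace.proj (0 : Fin d))) fun _ hx =>
    mul_nonneg (Real.rpow_nonneg (le_of_lt hx) _) (Real.rpow_nonneg (abs_nonneg _) _)

lemma wnorm_nonneg (p θ : ℝ) (f : EuclideanSpace ℝ (Fin d) → ℝ) : 0 ≤ wnorm d p θ f :=
  Real.rpow_nonneg (integral_rpow_mul_abs_rpow_nonneg p θ f) _

lemma wnorm_rpow (hp : 0 < p) (θ : ℝ) (f : EuclideanSpace ℝ (Fin d) → ℝ) :
    wnorm d p θ f ^ p =
      ∫ x, (x 0 * |f x|) ^ p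
        ∂halfSpaceMeasure volume (EuclideanSpace.proj (0 : Fin d)) (θ - d - p + 1) := by
  rw [wnorm, ← Real.rpow_mul (integral_rpow_mul_abs_rpow_nonneg p θ f),
    one_div_mul_cancel hp.ne', Real.rpow_one, integral_halfSpaceMeasure]
  refine setIntegral_congr_fun (measurableSet_halfSpace (EuclideanSpace.proj (0 : Fin d)))
    fun x hx => ?_
  have hx0 : 0 < x 0 := hx
  simp only [EuclideanSpace.coe_proj]
  rw [Real.mul_rpow hx0.le (abs_nonneg _), ← mul_assoc, ← Real.rpow_add hx0]
  ring_nf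

lemma wnorm_div_rpow (hp : 0 < p) (θ : ℝ) (u : EuclideanSpace ℝ (Fin d) → ℝ) :
    wnorm d p θ (fun x => u x / x 0) ^ p =
      ∫ x, |u x| ^ p
        ∂halfSpaceMeasure volume (EuclideanSpace.proj (0 : Fin d)) (θ - d - p + 1) := by
  rw [wnorm_rpow hp]
  refine integral_congr_ae ?_
  filter_upwards [ae_pos_halfSpaceMeasure] with x hx
  have hx0 : 0 < x 0 := hx
  rw [abs_div, abs_of_pos hx0, mul_div_cancel₀ _ hx0.ne']

lemma integral_abs_rpow_add_rpow_le_wnorm_add_rpow (hp : 1 < p) (θ : ℝ)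
    {u : EuclideanSpace ℝ (Fin d) → ℝ}
    (hu : IsHalfSpaceTestFunction (EuclideanSpace.proj (0 : Fin d)) u) :
    ∫ x, (|u x| ^ p + (x 0 * ‖fderiv ℝ u x‖) ^ p)
        ∂halfSpaceMeasure volume (EuclideanSpace.proj (0 : Fin d)) (θ - d - p + 1) ≤
      (wnorm d p θ (fun x => u x / x 0) + wnorm d p θ (fun x => ‖fderiv ℝ u x‖)) ^ p := by
  have hp0 : 0 < p := zero_lt_one.trans hp
  refine le_of_eq_of_le ?_ (Real.add_rpow_le_rpow_add (wnorm_nonneg p θ _) (wnorm_nonneg p θ _)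
    hp.le)
  rw [wnorm_div_rpow hp0, wnorm_rpow hp0]
  simp_rw [abs_norm]
  exact integral_add (hu.abs_rpow hp).integrable (hu.integrable_rpow_mul_norm_fderiv hp0)

lemma whitneyOscLE_toLp_iff {ε β : ℝ} {a : EuclideanSpace ℝ (Fin d) → Fin d → ℝ} :
    WhitneyOscLE (EuclideanSpace.proj (0 : Fin d)) ε β (fun x => WithLp.toLp 2 (a x)) ↔
      ∀ x y : EuclideanSpace ℝ (Fin d), 0 < x 0 → 0 < y 0 → dist x y ≤ ε * min (x 0) (y 0) →
        Real.sqrt (∑ i, (a x i - a y i) ^ 2) ≤ β := by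
  simp only [WhitneyOscLE, ← dist_eq_norm (WithLp.toLp 2 (a _)), EuclideanSpace.dist_eq,
    Real.dist_eq, sq_abs, EuclideanSpace.coe_proj]

end EuclideanHalfSpace

theorem stmt3_general (d : ℕ) [NeZero d] (p θ γ : ℝ) (hp : 1 < p) (hγ : γ = θ - d - p + 1)
    (ε : ℝ) (hε : 0 < ε) :
    ∃ N : ℝ, 0 < N ∧
      ∀ β : ℝ, ∀ abar : EuclideanSpace ℝ (Fin d) → Fin d → ℝ,
        Measurable abar →
        (∃ C : ℝ, ∀ x i, |abar x i| ≤ C) →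
        (∀ x y : EuclideanSpace ℝ (Fin d), 0 < x 0 → 0 < y 0 →
          dist x y ≤ ε * min (x 0) (y 0) →
          Real.sqrt (∑ i, (abar x i - abar y i) ^ 2) ≤ β) →
      ∀ u : EuclideanSpace ℝ (Fin d) → ℝ,
        ContDiff ℝ 1 u → HasCompactSupport u →
        tsupport u ⊆ {x | 0 < x 0} →
        |(∫ x in {x : EuclideanSpace ℝ (Fin d) | 0 < x 0},
            (x 0) ^ γ * |u x| ^ (p - 2) * u x *
              ∑ i, abar x i * fderiv ℝ u x (EuclideanSpace.single i 1)) +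
          p⁻¹ * γ *
            ∫ x in {x : EuclideanSpace ℝ (Fin d) | 0 < x 0},
              abar x 0 * (x 0) ^ (γ - 1) * |u x| ^ p| ≤
          N * β * (wnorm d p θ (fun x => u x / x 0) +
                    wnorm d p θ (fun x => ‖fderiv ℝ u x‖)) ^ p := by
  subst hγ
  obtain ⟨N, hN, hest⟩ := exists_abs_setIntegral_rpow_add_le (EuclideanSpace.proj (0 : Fin d))
    (θ - d - p + 1) volume hp hε
  refine ⟨N, hN, fun β abar habar hbdd hosc u hu hcomp hsupp => ?_⟩
  have hβ : 0 ≤ β := (Real.sqrt_nonneg _).trans <|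
    hosc (EuclideanSpace.single 0 1) (EuclideanSpace.single 0 1) (by simp) (by simp)
      (by simp [hε.le])
  have htest : IsHalfSpaceTestFunction (EuclideanSpace.proj (0 : Fin d)) u := ⟨hu, hcomp, hsupp⟩
  have hbound := hest β hβ (fun x => WithLp.toLp 2 (abar x))
    ((PiLp.continuous_toLp 2 _).measurable.comp habar) (exists_norm_toLp_le hbdd)
    (whitneyOscLE_toLp_iff.2 hosc) u htest
  simp_rw [sum_mul_clm_single]
  exact hbound.trans (mul_le_mul_of_nonneg_left
    (integral_abs_rpow_add_rpow_le_wnorm_add_rpow hp θ htest) (by positivity))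

/-- Lemma 6.1.2: there is `N = N(d,p,θ,ε)` such that for every `β > 0`, every
bounded measurable vector field `ā` on `ℝ^d_+` with `|ā(x) − ā(y)| ≤ β` whenever
`|x − y| ≤ ε (x¹ ∧ y¹)`, and every `u ∈ C_c^∞(ℝ^d_+)`,
`|∫ (x¹)^γ |u|^{p−2} u ā^i D_i u dx + p⁻¹ γ ∫ ā¹ (x¹)^{γ−1} |u|^p dx|
  ≤ N β (‖M⁻¹u‖_{L_{p,θ}} + ‖Du‖_{L_{p,θ}})^p`, where `γ = θ − d − p + 1`. -/
theorem stmt3 (d : ℕ) [NeZero d] (p θ γ : ℝ) (hp : 2 ≤ p)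
    (hθ1 : (d : ℝ) - 1 < θ) (hθ2 : θ < d - 1 + p)
    (hγ : γ = θ - d - p + 1)
    (ε : ℝ) (hε : 0 < ε) :
    ∃ N : ℝ, 0 < N ∧
      ∀ β : ℝ, 0 < β →
      ∀ abar : EuclideanSpace ℝ (Fin d) → Fin d → ℝ,
        Measurable abar →
        (∃ C : ℝ, ∀ x i, |abar x i| ≤ C) →
        (∀ x y : EuclideanSpace ℝ (Fin d), 0 < x 0 → 0 < y 0 →
          dist x y ≤ ε * min (x 0) (y 0) →
          Real.sqrt (∑ i, (abar x i - abar y i) ^ 2) ≤ β) →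
      ∀ u : EuclideanSpace ℝ (Fin d) → ℝ,
        ContDiff ℝ (⊤ : ℕ∞) u → HasCompactSupport u →
        tsupport u ⊆ {x | 0 < x 0} →
        |(∫ x in {x : EuclideanSpace ℝ (Fin d) | 0 < x 0},
            (x 0) ^ γ * |u x| ^ (p - 2) * u x *
              ∑ i, abar x i * fderiv ℝ u x (EuclideanSpace.single i 1)) +
          p⁻¹ * γ *
            ∫ x in {x : EuclideanSpace ℝ (Fin d) | 0 < x 0},
              abar x 0 * (x 0) ^ (γ - 1) * |u x| ^ p| ≤
          N * β * (wnorm d p θ (fun x => u x / x 0) +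
                    wnorm d p θ (fun x => ‖fderiv ℝ u x‖)) ^ p := by
  obtain ⟨N, hN, hest⟩ := stmt3_general d p θ γ (one_lt_two.trans_le hp) hγ ε hε
  exact ⟨N, hN, fun β _ abar ha hC hosc u hu => hest β abar ha hC hosc u (hu.of_le (by simp))⟩
end

section
/- (Key deterministic estimate from the proof of Theorem 5.30.1) Let d ≥ 1 be an integer, p ∈ [2,∞), θ ∈ (d−1, d−1+p), γ = θ − d − p + 1 (so γ < 0), and δ, δ̄ ∈ (0,∞). Let a = (a^{ij}) and b = (b^{ij}) be bounded measurable d×d-matrix-valued functions on ℝ^d_+ such that for all x ∈ ℝ^d_+ and ξ ∈ ℝ^d: δ̄ (Σ_i a^{i1}(x) ξ^i)² ≤ b^{ij}(x) ξ^i ξ^j and b^{ij}(x) ξ^i ξ^j ≥ δ |ξ|². Then for every u ∈ C_c^∞(ℝ^d_+), | ∫_{ℝ^d_+} (x¹)^γ |u|^{p−2} u a^{i1} D_i u dx | ≤ δ̄^{−1/2} δ^{−1/2} p |γ|^{−1} ∫_{ℝ^d_+} (x¹)^{γ+1} |u|^{p−2} b^{ij} (D_i u)(D_j u) dx. -/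
open MeasureTheory Finset

/-! Write `w` for the first coordinate and set `H = ∫ w^(γ-1) |u|^p`,
`K = ∫ w^(γ+1) |u|^(p-2) (D₁u)²`, `J = ∫ w^(γ+1) |u|^(p-2) b Du·Du`. Splitting
`w^γ = w^((γ-1)/2) w^((γ+1)/2)`, Cauchy–Schwarz gives, for any measurable `g`,
`(∫ w^γ |u|^(p-2) u g)² ≤ H ∫ w^(γ+1) |u|^(p-2) g²`.
With `g = D₁u` and the integration by parts `γ H = -p ∫ w^γ |u|^(p-2) u D₁u` this is Hardy's
inequality `γ² H ≤ p² K`, where `δ K ≤ J` by ellipticity; with `g = a^{i1} D_i u` it bounds the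
square of the left-hand side by `H J / δ̄ ≤ p² J² / (γ² δ δ̄)`.
-/

section WeightedIntegrals

variable {α : Type*} [MeasurableSpace α] {μ : Measure α}

theorem sq_integral_mul_le {f g : α → ℝ} (hf : MemLp f 2 μ) (hg : MemLp g 2 μ) :
    (∫ x, f x * g x ∂μ) ^ 2 ≤ (∫ x, f x ^ 2 ∂μ) * ∫ x, g x ^ 2 ∂μ := by
  have inner_toLp {f g : α → ℝ} (hf : MemLp f 2 μ) (hg : MemLp g 2 μ) :
      inner ℝ (hf.toLp f) (hg.toLp g) = ∫ x, f x * g x ∂μ := by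
    rw [L2.inner_def]
    refine integral_congr_ae ?_
    filter_upwards [hf.coeFn_toLp, hg.coeFn_toLp] with x hfx hgx
    simp only [hfx, hgx, RCLike.inner_apply, conj_trivial, mul_comm]
  simpa only [inner_toLp, ← sq] using real_inner_mul_inner_self_le (hf.toLp f) (hg.toLp g)

theorem integrable_mul_sq_of_le {m g B : α → ℝ} {c : ℝ} (hc : 0 < c) (hm : 0 ≤ᵐ[μ] m)
    (hm_meas : AEStronglyMeasurable m μ) (hg : AEStronglyMeasurable g μ)
    (hgB : ∀ᵐ x ∂μ, c * g x ^ 2 ≤ B x) (hB : Integrable (fun x => m x * B x) μ) :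
    Integrable (fun x => m x * g x ^ 2) μ := by
  refine (hB.const_mul c⁻¹).mono' (hm_meas.mul (hg.pow 2)) ?_
  filter_upwards [hm, hgB] with x hmx hgBx
  rw [Real.norm_of_nonneg (mul_nonneg hmx (sq_nonneg _)), mul_left_comm]
  exact mul_le_mul_of_nonneg_left ((le_inv_mul_iff₀ hc).2 hgBx) hmx

theorem mul_integral_mul_sq_le {m g B : α → ℝ} {c : ℝ} (hc : 0 < c) (hm : 0 ≤ᵐ[μ] m)
    (hgB : ∀ᵐ x ∂μ, c * g x ^ 2 ≤ B x) (hB : Integrable (fun x => m x * B x) μ) :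
    c * ∫ x, m x * g x ^ 2 ∂μ ≤ ∫ x, m x * B x ∂μ := by
  rw [← integral_const_mul]
  refine integral_mono_of_nonneg ?_ hB ?_
  · filter_upwards [hm] with x hmx
    exact mul_nonneg hc.le (mul_nonneg hmx (sq_nonneg _))
  · filter_upwards [hm, hgB] with x hmx hgBx
    simpa only [mul_left_comm] using mul_le_mul_of_nonneg_left hgBx hmx

theorem rpow_mul_abs_rpow_nonneg_ae {w : α → ℝ} (hw : ∀ᵐ x ∂μ, 0 < w x) (u : α → ℝ) (s q : ℝ) :
    0 ≤ᵐ[μ] fun x => w x ^ s * |u x| ^ q :=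
  hw.mono fun _ hx => mul_nonneg (Real.rpow_nonneg hx.le s) (Real.rpow_nonneg (abs_nonneg _) q)

theorem abs_rpow_sub_two_mul_sq {p : ℝ} (hp : p ≠ 0) (t : ℝ) :
    |t| ^ (p - 2) * t ^ 2 = |t| ^ p := by
  rw [← sq_abs t, ← Real.rpow_natCast, ← Real.rpow_add' (abs_nonneg t) (by simpa using hp)]
  simp

theorem sqrt_rpow_sub_one_mul_sqrt_rpow_add_one {w : ℝ} (hw : 0 < w) (γ : ℝ) :
    √(w ^ (γ - 1)) * √(w ^ (γ + 1)) = w ^ γ := by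
  rw [← Real.sqrt_mul (by positivity), ← Real.rpow_add hw, Real.sqrt_eq_iff_mul_self_eq
    (by positivity) (by positivity), ← Real.rpow_add hw]
  ring_nf

theorem sq_integral_rpow_mul_le {w u g : α → ℝ} {p γ : ℝ} (hp : p ≠ 0)
    (hw : ∀ᵐ x ∂μ, 0 < w x) (hw_meas : AEMeasurable w μ) (hu : AEMeasurable u μ)
    (hg : AEMeasurable g μ) (hH : Integrable (fun x => w x ^ (γ - 1) * |u x| ^ p) μ)
    (hK : Integrable (fun x => w x ^ (γ + 1) * |u x| ^ (p - 2) * g x ^ 2) μ) :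
    (∫ x, w x ^ γ * |u x| ^ (p - 2) * u x * g x ∂μ) ^ 2 ≤
      (∫ x, w x ^ (γ - 1) * |u x| ^ p ∂μ) *
        ∫ x, w x ^ (γ + 1) * |u x| ^ (p - 2) * g x ^ 2 ∂μ := by
  let F x := √(w x ^ (γ - 1)) * √(|u x| ^ (p - 2)) * u x
  let G x := √(w x ^ (γ + 1)) * √(|u x| ^ (p - 2)) * g x
  have hF_sq : (fun x => w x ^ (γ - 1) * |u x| ^ p) =ᵐ[μ] fun x => F x ^ 2 := by
    filter_upwards [hw] with x hx
    simp only [F, mul_pow, Real.sq_sqrt (Real.rpow_nonneg hx.le _),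
      Real.sq_sqrt (Real.rpow_nonneg (abs_nonneg (u x)) _), mul_assoc, abs_rpow_sub_two_mul_sq hp]
  have hG_sq : (fun x => w x ^ (γ + 1) * |u x| ^ (p - 2) * g x ^ 2) =ᵐ[μ] fun x => G x ^ 2 := by
    filter_upwards [hw] with x hx
    simp only [G, mul_pow, Real.sq_sqrt (Real.rpow_nonneg hx.le _),
      Real.sq_sqrt (Real.rpow_nonneg (abs_nonneg (u x)) _)]
  have hFG : (fun x => w x ^ γ * |u x| ^ (p - 2) * u x * g x) =ᵐ[μ] fun x => F x * G x := by
    filter_upwards [hw] with x hx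
    rw [← sqrt_rpow_sub_one_mul_sqrt_rpow_add_one hx,
      ← Real.mul_self_sqrt (Real.rpow_nonneg (abs_nonneg (u x)) (p - 2))]
    ring
  have hF_meas : AEMeasurable F μ :=
    ((hw_meas.pow_const _).sqrt.mul (hu.abs.pow_const _).sqrt).mul hu
  have hG_meas : AEMeasurable G μ :=
    ((hw_meas.pow_const _).sqrt.mul (hu.abs.pow_const _).sqrt).mul hg
  rw [integral_congr_ae hF_sq, integral_congr_ae hG_sq, integral_congr_ae hFG]
  exact sq_integral_mul_le
    ((memLp_two_iff_integrable_sq hF_meas.aestronglyMeasurable).2 (hH.congr hF_sq))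
    ((memLp_two_iff_integrable_sq hG_meas.aestronglyMeasurable).2 (hK.congr hG_sq))

theorem mul_sq_integral_rpow_mul_le {w u g B : α → ℝ} {p γ c : ℝ} (hp : p ≠ 0) (hc : 0 < c)
    (hw : ∀ᵐ x ∂μ, 0 < w x) (hw_meas : AEMeasurable w μ) (hu : AEMeasurable u μ)
    (hg : AEMeasurable g μ) (hgB : ∀ᵐ x ∂μ, c * g x ^ 2 ≤ B x)
    (hH : Integrable (fun x => w x ^ (γ - 1) * |u x| ^ p) μ)
    (hB : Integrable (fun x => w x ^ (γ + 1) * |u x| ^ (p - 2) * B x) μ) :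
    c * (∫ x, w x ^ γ * |u x| ^ (p - 2) * u x * g x ∂μ) ^ 2 ≤
      (∫ x, w x ^ (γ - 1) * |u x| ^ p ∂μ) *
        ∫ x, w x ^ (γ + 1) * |u x| ^ (p - 2) * B x ∂μ := by
  have hm := rpow_mul_abs_rpow_nonneg_ae hw u (γ + 1) (p - 2)
  have hK := integrable_mul_sq_of_le hc hm
    ((hw_meas.pow_const _).mul (hu.abs.pow_const _)).aestronglyMeasurable
    hg.aestronglyMeasurable hgB hB
  have hH_nonneg : 0 ≤ ∫ x, w x ^ (γ - 1) * |u x| ^ p ∂μ :=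
    integral_nonneg_of_ae (rpow_mul_abs_rpow_nonneg_ae hw u _ _)
  calc c * (∫ x, w x ^ γ * |u x| ^ (p - 2) * u x * g x ∂μ) ^ 2
      ≤ c * ((∫ x, w x ^ (γ - 1) * |u x| ^ p ∂μ) *
          ∫ x, w x ^ (γ + 1) * |u x| ^ (p - 2) * g x ^ 2 ∂μ) := by
        gcongr
        exact sq_integral_rpow_mul_le hp hw hw_meas hu hg hH hK
    _ = (∫ x, w x ^ (γ - 1) * |u x| ^ p ∂μ) *
          (c * ∫ x, w x ^ (γ + 1) * |u x| ^ (p - 2) * g x ^ 2 ∂μ) := mul_left_comm _ _ _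
    _ ≤ _ := mul_le_mul_of_nonneg_left (mul_integral_mul_sq_le hc hm hgB hB) hH_nonneg

end WeightedIntegrals

section Regularity

theorem continuous_rpow_mul_of_tsupport_subset {X : Type*} [TopologicalSpace X] {w φ : X → ℝ}
    (s : ℝ) (hw : Continuous w) (hφ : Continuous φ) (hsub : tsupport φ ⊆ {x | 0 < w x}) :
    Continuous fun x => w x ^ s * φ x :=
  continuous_of_tsupport fun _ hx =>
    (hw.continuousAt.rpow_const (.inl (hsub (tsupport_mul_subset_right hx)).ne')).mul
      hφ.continuousAt

theorem tsupport_abs_rpow_subset {X : Type*} [TopologicalSpace X] {p : ℝ} (hp : p ≠ 0)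
    (u : X → ℝ) : tsupport (fun x => |u x| ^ p) ⊆ tsupport u :=
  tsupport_comp_subset (g := fun t => |t| ^ p) (by simp [hp]) u

theorem integrable_rpow_mul_abs_rpow {X : Type*} [TopologicalSpace X] [MeasurableSpace X]
    [OpensMeasurableSpace X] {μ : Measure X} [IsFiniteMeasureOnCompacts μ] {w u : X → ℝ} (s : ℝ)
    {p : ℝ} (hp : 0 < p) (hw : Continuous w) (hu : Continuous u) (hus : HasCompactSupport u)
    (hsub : tsupport u ⊆ {x | 0 < w x}) : Integrable (fun x => w x ^ s * |u x| ^ p) μ := by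
  have hφ := tsupport_abs_rpow_subset hp.ne' u
  exact (continuous_rpow_mul_of_tsupport_subset s hw
    (hu.abs.rpow_const fun _ => .inr hp.le) (hφ.trans hsub)).integrable_of_hasCompactSupport
    (hus.mono' ((subset_tsupport _).trans hφ)).mul_left

variable {E : Type*} [NormedAddCommGroup E] [NormedSpace ℝ E]

theorem contDiff_rpow_mul_of_tsupport_subset {n : WithTop ℕ∞} {w φ : E → ℝ} (s : ℝ)
    (hw : ContDiff ℝ n w) (hφ : ContDiff ℝ n φ) (hsub : tsupport φ ⊆ {x | 0 < w x}) :
    ContDiff ℝ n fun x => w x ^ s * φ x :=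
  contMDiff_iff_contDiff.1 <| contMDiff_of_tsupport fun _ hx =>
    ((hw.contDiffAt.rpow_const_of_ne (hsub (tsupport_mul_subset_right hx)).ne').mul
      hφ.contDiffAt).contMDiffAt

theorem integrable_rpow_mul_abs_rpow_mul_sum [MeasurableSpace E] [OpensMeasurableSpace E]
    {μ : Measure E} {ι : Type*} [Fintype ι] {w u : E → ℝ} {b : E → Matrix ι ι ℝ} (s : ℝ) {q : ℝ}
    (hq : 0 ≤ q) (v : ι → E) (hw : Continuous w)
    (hb : ∀ i j, LocallyIntegrable (fun x => b x i j) μ) (hu : ContDiff ℝ 1 u)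
    (hus : HasCompactSupport u) (hsub : tsupport u ⊆ {x | 0 < w x}) :
    Integrable (fun x => w x ^ s * |u x| ^ q *
      ∑ i, ∑ j, b x i j * fderiv ℝ u x (v i) * fderiv ℝ u x (v j)) μ := by
  have hDu i : Continuous fun x => fderiv ℝ u x (v i) :=
    (hu.continuous_fderiv one_ne_zero).clm_apply continuous_const
  simp only [mul_sum]
  refine integrable_finsetSum _ fun i _ => integrable_finsetSum _ fun j _ => ?_
  let φ x := fderiv ℝ u x (v i) * (|u x| ^ q * fderiv ℝ u x (v j))
  have hφ : Continuous φ :=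
    (hDu i).mul ((hu.continuous.abs.rpow_const fun _ => .inr hq).mul (hDu j))
  have hφs : tsupport φ ⊆ tsupport u :=
    tsupport_mul_subset_left.trans (tsupport_fderiv_apply_subset ℝ (v i))
  have hwφ := continuous_rpow_mul_of_tsupport_subset s hw hφ (hφs.trans hsub)
  refine ((hb i j).integrable_smul_left_of_hasCompactSupport hwφ
    (hus.mono' ((subset_tsupport _).trans hφs)).mul_left).congr (.of_forall fun x => ?_)
  simp only [φ, smul_eq_mul]
  ring

theorem integral_fderiv_apply_eq_zero [FiniteDimensional ℝ E] [MeasurableSpace E] [BorelSpace E]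
    {μ : Measure E} [μ.IsAddHaarMeasure] {f : E → ℝ} (hf : ContDiff ℝ 1 f)
    (hfs : HasCompactSupport f) (v : E) : ∫ x, fderiv ℝ f x v ∂μ = 0 := by
  have hf' : Integrable (fun x => fderiv ℝ f x v) μ :=
    ((hf.continuous_fderiv one_ne_zero).clm_apply
      continuous_const).integrable_of_hasCompactSupport (hfs.fderiv_apply ℝ v)
  simpa using integral_mul_fderiv_eq_neg_fderiv_mul_of_integrable (μ := μ) (f := f)
    (g := fun _ => (1 : ℝ)) (v := v) (by simpa using hf') (by simp)
    (by simpa using hf.continuous.integrable_of_hasCompactSupport hfs)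
    (fun x _ => hf.differentiable one_ne_zero x) (by fun_prop)

end Regularity

theorem abs_le_rpow_neg_half_mul {p γ δ δbar I H J : ℝ} (hp : 0 ≤ p) (hγ : γ ≠ 0) (hδ : 0 < δ)
    (hδbar : 0 < δbar) (hJ : 0 ≤ J) (hI : δbar * I ^ 2 ≤ H * J)
    (hH : δ * (γ ^ 2 * H) ≤ p ^ 2 * J) :
    |I| ≤ δbar ^ (-(1 : ℝ) / 2) * δ ^ (-(1 : ℝ) / 2) * p * |γ|⁻¹ * J := by
  have rpow_neg_half_sq {t : ℝ} (ht : 0 < t) : (t ^ (-(1 : ℝ) / 2)) ^ 2 = t⁻¹ := by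
    rw [← Real.rpow_mul_natCast ht.le, ← Real.rpow_neg_one]
    norm_num
  refine abs_le_of_sq_le_sq ?_ (by positivity)
  calc I ^ 2 = (δbar * I ^ 2) * (δ * γ ^ 2) / (δbar * (δ * γ ^ 2)) := by field_simp
    _ ≤ (H * J) * (δ * γ ^ 2) / (δbar * (δ * γ ^ 2)) := by gcongr
    _ = δ * (γ ^ 2 * H) * J / (δbar * (δ * γ ^ 2)) := by ring
    _ ≤ p ^ 2 * J * J / (δbar * (δ * γ ^ 2)) := by gcongr
    _ = (δbar ^ (-(1 : ℝ) / 2) * δ ^ (-(1 : ℝ) / 2) * p * |γ|⁻¹ * J) ^ 2 := by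
      simp only [mul_pow, rpow_neg_half_sq hδbar, rpow_neg_half_sq hδ, inv_pow, sq_abs]
      field_simp

section HalfSpace

variable {E : Type*} [NormedAddCommGroup E] [NormedSpace ℝ E]
  {ℓ : StrongDual ℝ E} {e : E} {u : E → ℝ} {p γ : ℝ}

theorem fderiv_rpow_mul_abs_rpow_apply (hp : 1 < p) (he : ℓ e = 1) {x : E} (hx : 0 < ℓ x)
    (hu : DifferentiableAt ℝ u x) :
    fderiv ℝ (fun y => ℓ y ^ γ * |u y| ^ p) x e =
      γ * (ℓ x ^ (γ - 1) * |u x| ^ p) +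
        p * (ℓ x ^ γ * |u x| ^ (p - 2) * u x * fderiv ℝ u x e) := by
  have hw := ℓ.hasFDerivAt.rpow_const (x := x) (p := γ) (.inl hx.ne')
  have hup := (hasDerivAt_abs_rpow (u x) hp).comp_hasFDerivAt x hu.hasFDerivAt
  have hprod : HasFDerivAt (fun y => ℓ y ^ γ * |u y| ^ p) _ x := hw.mul hup
  rw [hprod.fderiv]
  simp only [add_apply, smul_apply, smul_eq_mul, he]
  ring

variable [FiniteDimensional ℝ E] [MeasurableSpace E] [BorelSpace E]
  {μ : Measure E} [μ.IsAddHaarMeasure]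

theorem mul_setIntegral_rpow_mul_abs_rpow (hp : 1 < p) (he : ℓ e = 1) (hu : ContDiff ℝ 1 u)
    (hus : HasCompactSupport u) (hsub : tsupport u ⊆ {x | 0 < ℓ x}) :
    γ * ∫ x in {x | 0 < ℓ x}, ℓ x ^ (γ - 1) * |u x| ^ p ∂μ =
      -(p * ∫ x in {x | 0 < ℓ x}, ℓ x ^ γ * |u x| ^ (p - 2) * u x * fderiv ℝ u x e ∂μ) := by
  have hp0 : 0 < p := by linarith
  let S : Set E := {x | 0 < ℓ x}
  let F x := ℓ x ^ γ * |u x| ^ p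
  let H x := ℓ x ^ (γ - 1) * |u x| ^ p
  let V x := ℓ x ^ γ * |u x| ^ (p - 2) * u x * fderiv ℝ u x e
  have hS : MeasurableSet S := measurableSet_lt measurable_const ℓ.measurable
  have hφ := tsupport_abs_rpow_subset hp0.ne' u
  have hF : ContDiff ℝ 1 F := contDiff_rpow_mul_of_tsupport_subset γ ℓ.contDiff
    (hu.norm_rpow hp) (hφ.trans hsub)
  have hFs : HasCompactSupport F := (hus.mono' ((subset_tsupport _).trans hφ)).mul_left
  have hF_off {x : E} (hx : x ∉ S) : fderiv ℝ F x e = 0 := by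
    have hxF : x ∉ tsupport F := fun h => hx (hsub (hφ (tsupport_mul_subset_right h)))
    rw [fderiv_of_notMem_tsupport ℝ hxF, zero_apply]
  have hF_on : Set.EqOn (fun x => fderiv ℝ F x e) (fun x => γ * H x + p * V x) S :=
    fun x hx => fderiv_rpow_mul_abs_rpow_apply hp he hx (hu.differentiable one_ne_zero x)
  have hH_int : IntegrableOn H S μ :=
    (integrable_rpow_mul_abs_rpow _ hp0 ℓ.continuous hu.continuous hus hsub).integrableOn
  have hF_int : IntegrableOn (fun x => fderiv ℝ F x e) S μ :=
    (((hF.continuous_fderiv one_ne_zero).clm_apply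
      continuous_const).integrable_of_hasCompactSupport (hFs.fderiv_apply ℝ e)).integrableOn
  have hV_int : IntegrableOn (fun x => p * V x) S μ := by
    refine ((hF_int.congr_fun hF_on hS).sub (hH_int.const_mul γ)).congr (.of_forall fun x => ?_)
    exact add_sub_cancel_left (γ * H x) (p * V x)
  have hsum : γ * ∫ x in S, H x ∂μ + p * ∫ x in S, V x ∂μ = 0 := by
    rw [← integral_const_mul, ← integral_const_mul,
      ← integral_add (hH_int.const_mul γ) hV_int, ← setIntegral_congr_fun hS hF_on,
      setIntegral_eq_integral_of_forall_compl_eq_zero fun _ => hF_off,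
      integral_fderiv_apply_eq_zero hF hFs]
  exact eq_neg_of_add_eq_zero_left hsum

theorem hardy_halfSpace (hp : 1 < p) (he : ℓ e = 1) (hu : ContDiff ℝ 1 u)
    (hus : HasCompactSupport u) (hsub : tsupport u ⊆ {x | 0 < ℓ x})
    (hK : IntegrableOn (fun x => ℓ x ^ (γ + 1) * |u x| ^ (p - 2) * fderiv ℝ u x e ^ 2)
      {x | 0 < ℓ x} μ) :
    γ ^ 2 * ∫ x in {x | 0 < ℓ x}, ℓ x ^ (γ - 1) * |u x| ^ p ∂μ ≤
      p ^ 2 * ∫ x in {x | 0 < ℓ x},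
        ℓ x ^ (γ + 1) * |u x| ^ (p - 2) * fderiv ℝ u x e ^ 2 ∂μ := by
  have hp0 : 0 < p := by linarith
  let S : Set E := {x | 0 < ℓ x}
  let H := ∫ x in S, ℓ x ^ (γ - 1) * |u x| ^ p ∂μ
  let K := ∫ x in S, ℓ x ^ (γ + 1) * |u x| ^ (p - 2) * fderiv ℝ u x e ^ 2 ∂μ
  let V := ∫ x in S, ℓ x ^ γ * |u x| ^ (p - 2) * u x * fderiv ℝ u x e ∂μ
  change γ ^ 2 * H ≤ p ^ 2 * K
  have hℓ : ∀ᵐ x ∂μ.restrict S, 0 < ℓ x :=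
    ae_restrict_mem (measurableSet_lt measurable_const ℓ.measurable)
  have hparts : γ * H = -(p * V) := mul_setIntegral_rpow_mul_abs_rpow hp he hu hus hsub
  have hcs : V ^ 2 ≤ H * K := sq_integral_rpow_mul_le hp0.ne' hℓ ℓ.measurable.aemeasurable
    hu.continuous.measurable.aemeasurable
    ((hu.continuous_fderiv one_ne_zero).clm_apply continuous_const).measurable.aemeasurable
    (integrable_rpow_mul_abs_rpow _ hp0 ℓ.continuous hu.continuous hus hsub).integrableOn hK
  have hH_nonneg : 0 ≤ H := integral_nonneg_of_ae (rpow_mul_abs_rpow_nonneg_ae hℓ u _ _)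
  have hK_nonneg : 0 ≤ K := integral_nonneg_of_ae <|
    (rpow_mul_abs_rpow_nonneg_ae hℓ u _ _).mono fun _ hx => mul_nonneg hx (sq_nonneg _)
  rcases hH_nonneg.eq_or_lt with hH | hH
  · rw [← hH, mul_zero]
    positivity
  refine le_of_mul_le_mul_right ?_ hH
  calc γ ^ 2 * H * H = (γ * H) ^ 2 := by ring
    _ = p ^ 2 * V ^ 2 := by rw [hparts]; ring
    _ ≤ p ^ 2 * (H * K) := by gcongr
    _ = p ^ 2 * K * H := by ring

theorem mul_hardy_halfSpace_le {B : E → ℝ} {δ : ℝ} (hp : 1 < p) (hδ : 0 < δ) (he : ℓ e = 1)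
    (hu : ContDiff ℝ 1 u) (hus : HasCompactSupport u) (hsub : tsupport u ⊆ {x | 0 < ℓ x})
    (hDB : ∀ᵐ x ∂μ.restrict {x | 0 < ℓ x}, δ * fderiv ℝ u x e ^ 2 ≤ B x)
    (hB : IntegrableOn (fun x => ℓ x ^ (γ + 1) * |u x| ^ (p - 2) * B x) {x | 0 < ℓ x} μ) :
    δ * (γ ^ 2 * ∫ x in {x | 0 < ℓ x}, ℓ x ^ (γ - 1) * |u x| ^ p ∂μ) ≤
      p ^ 2 * ∫ x in {x | 0 < ℓ x}, ℓ x ^ (γ + 1) * |u x| ^ (p - 2) * B x ∂μ := by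
  have hm := rpow_mul_abs_rpow_nonneg_ae (μ := μ.restrict {x | 0 < ℓ x})
    (ae_restrict_mem (measurableSet_lt measurable_const ℓ.measurable)) u (γ + 1) (p - 2)
  have hK := integrable_mul_sq_of_le hδ hm
    ((ℓ.measurable.pow_const _).mul
      (hu.continuous.measurable.abs.pow_const _)).aestronglyMeasurable
    ((hu.continuous_fderiv one_ne_zero).clm_apply continuous_const).aestronglyMeasurable hDB hB
  calc δ * (γ ^ 2 * ∫ x in {x | 0 < ℓ x}, ℓ x ^ (γ - 1) * |u x| ^ p ∂μ)
      ≤ δ * (p ^ 2 * ∫ x in {x | 0 < ℓ x},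
          ℓ x ^ (γ + 1) * |u x| ^ (p - 2) * fderiv ℝ u x e ^ 2 ∂μ) :=
        mul_le_mul_of_nonneg_left (hardy_halfSpace hp he hu hus hsub hK) hδ.le
    _ = p ^ 2 * (δ * ∫ x in {x | 0 < ℓ x},
          ℓ x ^ (γ + 1) * |u x| ^ (p - 2) * fderiv ℝ u x e ^ 2 ∂μ) := mul_left_comm _ _ _
    _ ≤ _ := mul_le_mul_of_nonneg_left (mul_integral_mul_sq_le hδ hm hDB hB) (sq_nonneg p)

theorem abs_setIntegral_rpow_mul_le_of_sq_le {A B : E → ℝ} {δ δbar : ℝ} (hp : 1 < p)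
    (hγ : γ ≠ 0) (hδ : 0 < δ) (hδbar : 0 < δbar) (he : ℓ e = 1) (hu : ContDiff ℝ 1 u)
    (hus : HasCompactSupport u) (hsub : tsupport u ⊆ {x | 0 < ℓ x})
    (hA : AEMeasurable A (μ.restrict {x | 0 < ℓ x}))
    (hAB : ∀ x, 0 < ℓ x → δbar * A x ^ 2 ≤ B x)
    (hDB : ∀ x, 0 < ℓ x → δ * fderiv ℝ u x e ^ 2 ≤ B x)
    (hB : IntegrableOn (fun x => ℓ x ^ (γ + 1) * |u x| ^ (p - 2) * B x) {x | 0 < ℓ x} μ) :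
    |∫ x in {x | 0 < ℓ x}, ℓ x ^ γ * |u x| ^ (p - 2) * u x * A x ∂μ| ≤
      δbar ^ (-(1 : ℝ) / 2) * δ ^ (-(1 : ℝ) / 2) * p * |γ|⁻¹ *
        ∫ x in {x | 0 < ℓ x}, ℓ x ^ (γ + 1) * |u x| ^ (p - 2) * B x ∂μ := by
  have hp0 : 0 < p := by linarith
  have hℓ : ∀ᵐ x ∂μ.restrict {x | 0 < ℓ x}, 0 < ℓ x :=
    ae_restrict_mem (measurableSet_lt measurable_const ℓ.measurable)
  have hJ_nonneg : 0 ≤ ∫ x in {x | 0 < ℓ x}, ℓ x ^ (γ + 1) * |u x| ^ (p - 2) * B x ∂μ :=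
    integral_nonneg_of_ae <| by
      filter_upwards [rpow_mul_abs_rpow_nonneg_ae hℓ u _ _, hℓ] with x hmx hx
      exact mul_nonneg hmx ((mul_nonneg hδbar.le (sq_nonneg _)).trans (hAB x hx))
  exact abs_le_rpow_neg_half_mul hp0.le hγ hδ hδbar hJ_nonneg
    (mul_sq_integral_rpow_mul_le hp0.ne' hδbar hℓ ℓ.measurable.aemeasurable
      hu.continuous.measurable.aemeasurable hA (hℓ.mono hAB)
      (integrable_rpow_mul_abs_rpow _ hp0 ℓ.continuous hu.continuous hus hsub).integrableOn hB)
    (mul_hardy_halfSpace_le hp hδ he hu hus hsub (hℓ.mono hDB) hB)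

end HalfSpace

-- For `p < 2` the weight `|u|^(p-2)` vanishes where `u` does, since `0 ^ s = 0` for `s < 0`.
theorem stmt13_general {ι : Type*} [Fintype ι] [DecidableEq ι] (k : ι) {p γ δ δbar : ℝ}
    (hp : 1 < p) (hγ : γ ≠ 0) (hδ : 0 < δ) (hδbar : 0 < δbar)
    {a : EuclideanSpace ℝ ι → ι → ℝ} {b : EuclideanSpace ℝ ι → Matrix ι ι ℝ}
    (ha : ∀ i, Measurable fun x => a x i)
    (hcontrol : ∀ x : EuclideanSpace ℝ ι, 0 < x k → ∀ ξ : ι → ℝ,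
      δbar * (∑ i, a x i * ξ i) ^ 2 ≤ ∑ i, ∑ j, b x i j * ξ i * ξ j)
    (hell : ∀ x : EuclideanSpace ℝ ι, 0 < x k → ∀ ξ : ι → ℝ,
      δ * ξ k ^ 2 ≤ ∑ i, ∑ j, b x i j * ξ i * ξ j)
    {u : EuclideanSpace ℝ ι → ℝ} (hu : ContDiff ℝ 1 u) (hus : HasCompactSupport u)
    (hsub : tsupport u ⊆ {x | 0 < x k})
    (hJ : IntegrableOn (fun x : EuclideanSpace ℝ ι => (x k) ^ (γ + 1) * |u x| ^ (p - 2) *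
      ∑ i, ∑ j, b x i j * fderiv ℝ u x (EuclideanSpace.single i 1) *
        fderiv ℝ u x (EuclideanSpace.single j 1)) {x | 0 < x k}) :
    |∫ x in {x : EuclideanSpace ℝ ι | 0 < x k},
        (x k) ^ γ * |u x| ^ (p - 2) * u x *
          ∑ i, a x i * fderiv ℝ u x (EuclideanSpace.single i 1)| ≤
      δbar ^ (-(1 : ℝ) / 2) * δ ^ (-(1 : ℝ) / 2) * p * |γ|⁻¹ *
        ∫ x in {x : EuclideanSpace ℝ ι | 0 < x k},
          (x k) ^ (γ + 1) * |u x| ^ (p - 2) *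
            ∑ i, ∑ j, b x i j * fderiv ℝ u x (EuclideanSpace.single i 1) *
              fderiv ℝ u x (EuclideanSpace.single j 1) := by
  have hA : Measurable fun x => ∑ i, a x i * fderiv ℝ u x (EuclideanSpace.single i 1) :=
    measurable_sum _ fun i _ => (ha i).mul
      ((hu.continuous_fderiv one_ne_zero).clm_apply continuous_const).measurable
  exact abs_setIntegral_rpow_mul_le_of_sq_le (ℓ := EuclideanSpace.proj k)
    (e := EuclideanSpace.single k 1) hp hγ hδ hδbar (by simp) hu hus hsub hA.aemeasurable
    (fun x hx => hcontrol x hx _)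
    (fun x hx => hell x hx fun i => fderiv ℝ u x (EuclideanSpace.single i 1)) hJ

/-- Key deterministic estimate from the proof of Theorem 5.30.1: if
`δ̄ (Σ_i a^{i1}(x) ξ^i)² ≤ b^{ij}(x) ξ^i ξ^j` and `b^{ij}(x) ξ^i ξ^j ≥ δ|ξ|²`
for all `x ∈ ℝ^d_+`, `ξ ∈ ℝ^d`, then for every `u ∈ C_c^∞(ℝ^d_+)`, with
`γ = θ − d − p + 1 < 0`,
`|∫ (x¹)^γ |u|^{p−2} u a^{i1} D_i u dx|
  ≤ δ̄^{-1/2} δ^{-1/2} p |γ|⁻¹ ∫ (x¹)^{γ+1} |u|^{p−2} b^{ij} D_iu D_ju dx`. -/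
theorem stmt13 (d : ℕ) [NeZero d] (p θ γ δ δbar : ℝ) (hp : 2 ≤ p)
    (hθ1 : (d : ℝ) - 1 < θ) (hθ2 : θ < d - 1 + p)
    (hγ : γ = θ - d - p + 1) (hδ : 0 < δ) (hδbar : 0 < δbar)
    (a b : EuclideanSpace ℝ (Fin d) → Matrix (Fin d) (Fin d) ℝ)
    (hameas : ∀ i j, Measurable fun x => a x i j)
    (hbmeas : ∀ i j, Measurable fun x => b x i j)
    (habd : ∃ C : ℝ, ∀ x i j, |a x i j| ≤ C ∧ |b x i j| ≤ C)
    (hcontrol : ∀ x : EuclideanSpace ℝ (Fin d), 0 < x 0 → ∀ ξ : Fin d → ℝ,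
      δbar * (∑ i, a x i 0 * ξ i) ^ 2 ≤ ∑ i, ∑ j, b x i j * ξ i * ξ j)
    (hell : ∀ x : EuclideanSpace ℝ (Fin d), 0 < x 0 → ∀ ξ : Fin d → ℝ,
      δ * ∑ i, (ξ i) ^ 2 ≤ ∑ i, ∑ j, b x i j * ξ i * ξ j)
    (u : EuclideanSpace ℝ (Fin d) → ℝ)
    (hu : ContDiff ℝ (⊤ : ℕ∞) u) (husupp : HasCompactSupport u)
    (husupp' : tsupport u ⊆ {x | 0 < x 0}) :
    |∫ x in {x : EuclideanSpace ℝ (Fin d) | 0 < x 0},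
        (x 0) ^ γ * |u x| ^ (p - 2) * u x *
          ∑ i, a x i 0 * fderiv ℝ u x (EuclideanSpace.single i 1)| ≤
      δbar ^ (-(1 : ℝ) / 2) * δ ^ (-(1 : ℝ) / 2) * p * |γ|⁻¹ *
        ∫ x in {x : EuclideanSpace ℝ (Fin d) | 0 < x 0},
          (x 0) ^ (γ + 1) * |u x| ^ (p - 2) *
            ∑ i, ∑ j, b x i j * fderiv ℝ u x (EuclideanSpace.single i 1) *
              fderiv ℝ u x (EuclideanSpace.single j 1) := by
  obtain ⟨C, hC⟩ := habd
  have hb i j : LocallyIntegrable fun x => b x i j :=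
    (memLp_top_of_bound (hbmeas i j).aestronglyMeasurable C
      (.of_forall fun x => (hC x i j).2)).locallyIntegrable le_top
  have hu1 : ContDiff ℝ 1 u := hu.of_le (by simp)
  exact stmt13_general 0 (by linarith) (by linarith : γ < 0).ne hδ hδbar (fun i => hameas i 0)
    hcontrol
    (fun x hx ξ => (mul_le_mul_of_nonneg_left
      (single_le_sum (fun i _ => sq_nonneg (ξ i)) (mem_univ 0)) hδ.le).trans (hell x hx ξ))
    hu1 husupp husupp'
    (integrable_rpow_mul_abs_rpow_mul_sum _ (sub_nonneg.2 hp) _ (by fun_prop) hb hu1 husupp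
      husupp').integrableOn
end
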